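/- arXiv:1103.0729 — 3 statements merged into one kernel-verified Lean document; each statement's English description precedes it below -/
import Mathlib

section
/- If γ is non-oscillating at O and 𝓗 is the (nonzero, self-adjoint, operator-norm one) limit of Hs(f)(x)/‖Hs(f)(x)‖ as x → O along γ, then ν is an eigen-direction of 𝓗: there exists λ ∈ ℝ such that 𝓗·ν = λ·ν. -/
open scoped RealInnerProductSpace Topology
open Filter

/-- A continuous function which is eventually nonzero eventually has constant sign. -/
theorem aux_sign {a L : ℝ} (haL : a < L) (p : ℝ → ℝ) (hp : ContinuousOn p (Set.Ioo a L))
    (h0 : ∀ᶠ s in 𝓝[<] L, p s ≠ 0) :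
    (∀ᶠ s in 𝓝[<] L, 0 < p s) ∨ (∀ᶠ s in 𝓝[<] L, p s < 0) := by
  have h1 : ∀ᶠ s in 𝓝[<] L, s ∈ Set.Ioo a L := Ioo_mem_nhdsLT haL
  obtain ⟨b, hb, hsub⟩ := mem_nhdsLT_iff_exists_Ioo_subset.1 (h1.and h0)
  have hb' : Set.Ioo b L ∈ 𝓝[<] L := Ioo_mem_nhdsLT hb
  have hc : ContinuousOn p (Set.Ioo b L) := hp.mono fun s hs => (hsub hs).1
  by_cases hex : ∃ x ∈ Set.Ioo b L, 0 < p x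
  · left
    obtain ⟨x, hx, hpx⟩ := hex
    filter_upwards [hb'] with s hs
    by_contra hcon
    obtain ⟨y, hy, hy0⟩ := isPreconnected_Ioo.intermediate_value₂ hs hx hc
      (continuousOn_const (c := (0 : ℝ))) (not_lt.1 hcon) hpx.le
    exact (hsub hy).2 hy0
  · right
    push Not at hex
    filter_upwards [hb'] with s hs
    exact lt_of_le_of_ne (hex s hs) (hsub hs).2

/-- Core differential argument. -/
theorem aux_core {E : Type*} [NormedAddCommGroup E] [InnerProductSpace ℝ E]
    {a L : ℝ} (haL : a < L) (h : ℝ → E) (A : ℝ → E →L[ℝ] E) (H : E →L[ℝ] E) (w : E)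
    (hne : ∀ s ∈ Set.Ioo a L, h s ≠ 0)
    (hd : ∀ s ∈ Set.Ioo a L, HasDerivAt h (A s (‖h s‖⁻¹ • h s)) s)
    (h0 : Tendsto h (𝓝[<] L) (𝓝 0))
    (hu : Tendsto (fun s => ‖h s‖⁻¹ • h s) (𝓝[<] L) (𝓝 w)) (hw : ‖w‖ = 1)
    (hH : ‖H‖ = 1)
    (hA : Tendsto (fun s => ‖A s‖⁻¹ • A s) (𝓝[<] L) (𝓝 H)) :
    H w = ⟪H w, w⟫ • w := by
  by_contra hcon
  set v : E := H w - ⟪H w, w⟫ • w with hv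
  have hv0 : v ≠ 0 := fun h => hcon (sub_eq_zero.1 h)
  have hww : ⟪w, w⟫ = 1 := by rw [real_inner_self_eq_norm_sq, hw]; norm_num
  have hwv : ⟪w, v⟫ = 0 := by
    rw [hv, inner_sub_right, inner_smul_right, hww, real_inner_comm]; ring
  have hHv : ⟪H w, v⟫ = ‖v‖ ^ 2 := by
    have : H w = v + ⟪H w, w⟫ • w := by rw [hv]; abel
    rw [this, inner_add_left, inner_smul_left, hwv, real_inner_self_eq_norm_sq]; simp
  have hvp : 0 < ‖v‖ ^ 2 := by positivity
  set c : ℝ := ‖v‖ ^ 2 / 2 with hc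
  have hcp : 0 < c := by positivity
  set u : ℝ → E := fun s => ‖h s‖⁻¹ • h s with hu_def
  set B : ℝ → E →L[ℝ] E := fun s => ‖A s‖⁻¹ • A s with hB_def
  have hBu : Tendsto (fun s => B s (u s)) (𝓝[<] L) (𝓝 (H w)) := by
    have hcont : Continuous fun q : (E →L[ℝ] E) × E => q.1 q.2 := by fun_prop
    exact (hcont.tendsto (H, w)).comp (hA.prodMk_nhds hu)
  have hq : Tendsto (fun s => ⟪B s (u s), v⟫ - ⟪u s, v⟫ * ⟪B s (u s), u s⟫
      + c * ⟪B s (u s), u s⟫) (𝓝[<] L)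
      (𝓝 (⟪H w, v⟫ - ⟪w, v⟫ * ⟪H w, w⟫ + c * ⟪H w, w⟫)) :=
    ((hBu.inner tendsto_const_nhds).sub
      ((hu.inner tendsto_const_nhds).mul (hBu.inner hu))).add ((hBu.inner hu).const_mul c)
  have hHw : -1 ≤ ⟪H w, w⟫ := by
    have h1 : |⟪H w, w⟫| ≤ ‖H w‖ * ‖w‖ := abs_real_inner_le_norm _ _
    have h2 : ‖H w‖ ≤ ‖H‖ * ‖w‖ := H.le_opNorm w
    rw [hw, hH] at h2
    rw [hw] at h1
    have := (abs_le.1 h1).1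
    linarith
  have hpos : 0 < ⟪H w, v⟫ - ⟪w, v⟫ * ⟪H w, w⟫ + c * ⟪H w, w⟫ := by
    rw [hHv, hwv]; nlinarith
  have hqpos := hq.eventually (lt_mem_nhds hpos)
  have h1 : ∀ᶠ s in 𝓝[<] L, s ∈ Set.Ioo a L := Ioo_mem_nhdsLT haL
  obtain ⟨b, hb, hsub⟩ := mem_nhdsLT_iff_exists_Ioo_subset.1 (h1.and hqpos)
  set F : ℝ → ℝ := fun s => ⟪h s, v⟫ / ‖h s‖ + c * Real.log ‖h s‖ with hF
  have hFd : ∀ s ∈ Set.Ioo b L, ∃ d, 0 ≤ d ∧ HasDerivAt F d s := by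
    intro s hs
    obtain ⟨hsa, hsq⟩ := hsub hs
    have hhs := hne s hsa
    have hN : ‖h s‖ ≠ 0 := norm_ne_zero_iff.2 hhs
    have hder := hd s hsa
    have hAB : A s = ‖A s‖ • B s := by
      by_cases hA0 : A s = 0
      · simp [hA0]
      · simp only [hB_def]
        rw [smul_smul, mul_inv_cancel₀ (norm_ne_zero_iff.2 hA0), one_smul]
    have hnorm : HasDerivAt (fun t => ‖h t‖) (⟪A s (u s), u s⟫) s := by
      have h2 := (hder.norm_sq).sqrt (by positivity)
      simp only [Real.sqrt_sq (norm_nonneg _)] at h2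
      convert h2 using 1
      simp only [hu_def]
      rw [inner_smul_right, real_inner_comm]
      simp only [map_smul]
      field_simp
    have hin : HasDerivAt (fun t => ⟪h t, v⟫) ⟪A s (u s), v⟫ s := by
      have h2 := hder.inner ℝ (hasDerivAt_const s v)
      rwa [inner_zero_right, zero_add] at h2
    have hfin := (hin.div hnorm hN).add ((hnorm.log hN).const_mul c)
    refine ⟨_, ?_, hfin⟩
    have hhv : ⟪h s, v⟫ = ‖h s‖ * ⟪u s, v⟫ := by
      simp only [hu_def]; rw [inner_smul_left]; simp; field_simp
    have e1 : ⟪A s (u s), v⟫ = ‖A s‖ * ⟪B s (u s), v⟫ := by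
      conv_lhs => rw [hAB]
      simp [inner_smul_left]
    have e2 : ⟪A s (u s), u s⟫ = ‖A s‖ * ⟪B s (u s), u s⟫ := by
      conv_lhs => rw [hAB]
      rw [smul_apply, inner_smul_left]; simp
    have : (⟪A s (u s), v⟫ * ‖h s‖ - ⟪h s, v⟫ * ⟪A s (u s), u s⟫) / ‖h s‖ ^ 2
        + c * (⟪A s (u s), u s⟫ / ‖h s‖) = ‖A s‖ / ‖h s‖ * (⟪B s (u s), v⟫ -
          ⟪u s, v⟫ * ⟪B s (u s), u s⟫ + c * ⟪B s (u s), u s⟫) := by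
      rw [hhv, e1, e2]; field_simp
    rw [this]
    have := hsq.le
    positivity
  have hmono : MonotoneOn F (Set.Ioo b L) := by
    apply monotoneOn_of_deriv_nonneg (convex_Ioo b L)
    · intro s hs
      obtain ⟨d, -, hd⟩ := hFd s hs
      exact hd.continuousAt.continuousWithinAt
    · rw [interior_Ioo]
      intro s hs
      obtain ⟨d, -, hd⟩ := hFd s hs
      exact hd.differentiableAt.differentiableWithinAt
    · rw [interior_Ioo]
      intro s hs
      obtain ⟨d, hd0, hd⟩ := hFd s hs
      rw [hd.deriv]; exact hd0
  have hlog : Tendsto (fun s => Real.log ‖h s‖) (𝓝[<] L) atBot := by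
    refine Real.tendsto_log_nhdsNE_zero.comp (tendsto_nhdsWithin_iff.2 ⟨?_, ?_⟩)
    · simpa using h0.norm
    · filter_upwards [h1] with s hs
      simpa using hne s hs
  obtain ⟨s0, hs0⟩ : (Set.Ioo b L).Nonempty := Set.nonempty_Ioo.2 hb
  have hbig := hlog.eventually (eventually_lt_atBot ((F s0 - ‖v‖) / c))
  have hge : ∀ᶠ s in 𝓝[<] L, s ∈ Set.Ioo s0 L := Ioo_mem_nhdsLT hs0.2
  obtain ⟨s, hs1, hs2⟩ := (hbig.and hge).exists
  have hsb : s ∈ Set.Ioo b L := ⟨hs0.1.trans hs2.1, hs2.2⟩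
  have hle := hmono hs0 hsb hs2.1.le
  have hphi : ⟪h s, v⟫ / ‖h s‖ ≤ ‖v‖ := by
    have := norm_pos_iff.2 (hne s (hsub hsb).1)
    rw [div_le_iff₀ this, mul_comm]
    exact real_inner_le_norm _ _
  rw [lt_div_iff₀ hcp] at hs1
  have hFs : F s = ⟪h s, v⟫ / ‖h s‖ + c * Real.log ‖h s‖ := rfl
  linarith

/-- The limit of secants is minus the limit of tangents. -/
theorem aux_secant {E : Type*} [NormedAddCommGroup E] [NormedSpace ℝ E]
    {a L : ℝ} (haL : a < L) (γ u : ℝ → E) (w ν : E)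
    (hd : ∀ s ∈ Set.Ioo a L, HasDerivAt γ (u s) s)
    (hγ : Tendsto γ (𝓝[<] L) (𝓝 0)) (hu : Tendsto u (𝓝[<] L) (𝓝 w)) (hw : ‖w‖ = 1)
    (hν : Tendsto (fun s => ‖γ s‖⁻¹ • γ s) (𝓝[<] L) (𝓝 ν)) : ν = -w := by
  classical
  set g : ℝ → E := Function.update γ L 0 with hg
  have hgd : ∀ s ∈ Set.Ioo a L, HasDerivAt g (u s) s := by
    intro s hs
    refine (hd s hs).congr_of_eventuallyEq ?_
    filter_upwards [isOpen_ne.mem_nhds hs.2.ne] with t ht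
    exact Function.update_of_ne ht _ _
  have hgw : HasDerivWithinAt g w (Set.Iic L) L := by
    apply hasDerivWithinAt_Iic_of_tendsto_deriv (s := Set.Ioo a L)
    · intro s hs
      exact (hgd s hs).differentiableAt.differentiableWithinAt
    · have : Tendsto g (𝓝[Set.Ioo a L] L) (𝓝 0) := by
        refine (hγ.mono_left (nhdsWithin_mono _ fun s hs => hs.2)).congr' ?_
        filter_upwards [self_mem_nhdsWithin] with t ht
        exact (Function.update_of_ne ht.2.ne _ _).symm
      unfold ContinuousWithinAt
      simpa [hg] using this
    · exact Ioo_mem_nhdsLT haL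
    · refine hu.congr' ?_
      filter_upwards [Ioo_mem_nhdsLT haL] with t ht
      exact (hgd t ht).deriv.symm
  have hsl := (hasDerivWithinAt_iff_tendsto_slope' (s := Set.Iio L) (by simp)).1
    (hgw.mono Set.Iio_subset_Iic_self)
  have hsl2 : Tendsto (fun s => (s - L)⁻¹ • γ s) (𝓝[<] L) (𝓝 w) := by
    refine hsl.congr' ?_
    filter_upwards [self_mem_nhdsWithin] with t ht
    have ht' : t ≠ L := ne_of_lt (Set.mem_Iio.1 ht)
    simp [slope_def_module, hg, Function.update_of_ne ht']
  have hn := (hsl2.norm.inv₀ (by rw [hw]; norm_num)).smul hsl2.neg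
  rw [hw, inv_one, one_smul] at hn
  refine tendsto_nhds_unique (hν.congr' ?_) hn
  filter_upwards [self_mem_nhdsWithin] with t ht
  have ht' : t < L := ht
  have : |(t - L)⁻¹| = -(t - L)⁻¹ := abs_of_neg (inv_neg''.2 (by linarith))
  have hne : t - L ≠ 0 := (sub_neg.2 ht').ne
  rw [norm_smul, Real.norm_eq_abs, this, ← smul_neg, smul_smul, smul_neg, ← neg_smul]
  congr 1
  rw [mul_inv, inv_neg, inv_inv]
  field_simp

/-- Convergence of one coordinate of the unit gradient, from non-oscillation. -/
theorem aux_coord {a L : ℝ} (haL : a < L) (p N : ℝ → ℝ)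
    (hp : ContinuousOn p (Set.Ioo a L)) (hN : ContinuousOn N (Set.Ioo a L))
    (hNpos : ∀ s ∈ Set.Ioo a L, 0 < N s) (hpN : ∀ s, p s ^ 2 ≤ N s ^ 2)
    (h0 : (∀ᶠ s in 𝓝[<] L, p s = 0) ∨ (∀ᶠ s in 𝓝[<] L, p s ≠ 0))
    (hosc : ∀ c : ℝ, (∀ᶠ s in 𝓝[<] L, p s ^ 2 - c * N s ^ 2 = 0) ∨
      (∀ᶠ s in 𝓝[<] L, p s ^ 2 - c * N s ^ 2 ≠ 0)) :
    ∃ l, Tendsto (fun s => (N s)⁻¹ * p s) (𝓝[<] L) (𝓝 l) := by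
  have h1 : ∀ᶠ s in 𝓝[<] L, s ∈ Set.Ioo a L := Ioo_mem_nhdsLT haL
  have hr : ∃ r, Tendsto (fun s => p s ^ 2 / N s ^ 2) (𝓝[<] L) (𝓝 r) := by
    refine tendsto_of_no_upcrossings dense_univ ?_ ?_ ?_
    · rintro x - y - hxy ⟨hlt, hgt⟩
      have hcase : (∀ᶠ s in 𝓝[<] L, p s ^ 2 / N s ^ 2 ≤ x) ∨
          (∀ᶠ s in 𝓝[<] L, x ≤ p s ^ 2 / N s ^ 2) := by
        have hle : (∀ᶠ s in 𝓝[<] L, p s ^ 2 - x * N s ^ 2 ≤ 0) ∨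
            (∀ᶠ s in 𝓝[<] L, 0 ≤ p s ^ 2 - x * N s ^ 2) := by
          rcases hosc x with h | h
          · exact Or.inl (h.mono fun s hs => hs.le)
          · rcases aux_sign haL _ (by fun_prop) h with h | h
            · exact Or.inr (h.mono fun s hs => hs.le)
            · exact Or.inl (h.mono fun s hs => hs.le)
        refine hle.imp (fun h => ?_) (fun h => ?_)
        · filter_upwards [h, h1] with s hs hs1
          have := hNpos s hs1
          rw [div_le_iff₀ (by positivity)]; linarith
        · filter_upwards [h, h1] with s hs hs1
          have := hNpos s hs1
          rw [le_div_iff₀ (by positivity)]; linarith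
      rcases hcase with h | h
      · exact hgt (h.mono fun s hs => not_lt.2 (hs.trans hxy.le))
      · exact hlt (h.mono fun s hs => not_lt.2 hs)
    · exact isBoundedUnder_of ⟨1, fun s => div_le_one_of_le₀ (hpN s) (sq_nonneg _)⟩
    · exact isBoundedUnder_of ⟨0, fun s => by positivity⟩
  obtain ⟨r, hr⟩ := hr
  have hsq := hr.sqrt
  rcases h0 with h | h
  · refine ⟨0, tendsto_const_nhds.congr' ?_⟩
    filter_upwards [h] with s hs
    simp [hs]
  · rcases aux_sign haL p hp h with h | h
    · refine ⟨_, hsq.congr' ?_⟩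
      filter_upwards [h, h1] with s hs hs1
      have := hNpos s hs1
      rw [← div_pow, Real.sqrt_sq (by positivity)]; field_simp
    · refine ⟨_, hsq.neg.congr' ?_⟩
      filter_upwards [h, h1] with s hs hs1
      have := hNpos s hs1
      rw [← div_pow, Real.sqrt_sq_eq_abs, abs_of_neg (div_neg_of_neg_of_pos hs this)]; field_simp


/-- the limit of secants `ν` is an eigen-direction of the limit `𝓗` of the
normalized Hessian along a non-oscillating trajectory. -/
theorem limit_of_secants_is_eigenvector_of_limit_hessian_direction
    {n : ℕ} (hn : 2 ≤ n)
    (U : Set (EuclideanSpace ℝ (Fin n))) (hUopen : IsOpen U)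
    (hOU : (0 : EuclideanSpace ℝ (Fin n)) ∈ U)
    (f : EuclideanSpace ℝ (Fin n) → ℝ)
    (hfan : AnalyticOnNhd ℝ f U) (hf0 : f 0 = 0) (hgf0 : gradient f 0 = 0)
    (L : ℝ) (hL : 0 < L)
    (γ : ℝ → EuclideanSpace ℝ (Fin n))
    (hγU : ∀ s ∈ Set.Ico (0 : ℝ) L, γ s ∈ U)
    (hγreg : ∀ s ∈ Set.Ico (0 : ℝ) L, gradient f (γ s) ≠ 0)
    (hγode : ∀ s ∈ Set.Ico (0 : ℝ) L,
      HasDerivAt γ (‖gradient f (γ s)‖⁻¹ • gradient f (γ s)) s)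
    (hfneg : f (γ 0) < 0)
    (hfmono : StrictMonoOn (fun s => f (γ s)) (Set.Ico (0 : ℝ) L))
    (hγlim : Tendsto γ (𝓝[<] L) (𝓝 0))
    (hosc : ∀ g : EuclideanSpace ℝ (Fin n) → ℝ, AnalyticAt ℝ g 0 →
      (∀ᶠ s in 𝓝[<] L, g (γ s) = 0) ∨ (∀ᶠ s in 𝓝[<] L, g (γ s) ≠ 0))
    (ν : EuclideanSpace ℝ (Fin n)) (hν1 : ‖ν‖ = 1)
    (hνlim : Tendsto (fun s => ‖γ s‖⁻¹ • γ s) (𝓝[<] L) (𝓝 ν))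
    (H : EuclideanSpace ℝ (Fin n) →L[ℝ] EuclideanSpace ℝ (Fin n))
    (Hsym : ∀ u v : EuclideanSpace ℝ (Fin n), ⟪H u, v⟫ = ⟪u, H v⟫)
    (Hnorm : ‖H‖ = 1) (Hne : H ≠ 0)
    (hHlim : Tendsto (fun s => ‖fderiv ℝ (gradient f) (γ s)‖⁻¹ • fderiv ℝ (gradient f) (γ s))
      (𝓝[<] L) (𝓝 H)) :
    ∃ lam : ℝ, H ν = lam • ν := by
  have hmem : ∀ᶠ s in 𝓝[<] L, s ∈ Set.Ioo (0 : ℝ) L := Ioo_mem_nhdsLT hL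
  have hgan : ∀ x ∈ U, AnalyticAt ℝ (gradient f) x := by
    intro x hx
    have h1 := (hfan x hx).fderiv
    exact ((InnerProductSpace.toDual ℝ
      (EuclideanSpace ℝ (Fin n))).symm.toContinuousLinearEquiv.analyticAt _).fun_comp h1
  have hd : ∀ s ∈ Set.Ioo (0 : ℝ) L, HasDerivAt (fun s => gradient f (γ s))
      (fderiv ℝ (gradient f) (γ s) (‖gradient f (γ s)‖⁻¹ • gradient f (γ s))) s := by
    intro s hs
    have hs' : s ∈ Set.Ico (0 : ℝ) L := ⟨hs.1.le, hs.2⟩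
    exact (hgan _ (hγU s hs')).differentiableAt.hasFDerivAt.comp_hasDerivAt s (hγode s hs')
  have hcont : ContinuousOn (fun s => gradient f (γ s)) (Set.Ioo 0 L) := fun s hs =>
    (hd s hs).continuousAt.continuousWithinAt
  have hne : ∀ s ∈ Set.Ioo (0 : ℝ) L, gradient f (γ s) ≠ 0 := fun s hs => hγreg s ⟨hs.1.le, hs.2⟩
  have hcoan : ∀ i, AnalyticAt ℝ (fun x => gradient f x i) 0 := fun i =>
    ((EuclideanSpace.proj i : EuclideanSpace ℝ (Fin n) →L[ℝ] ℝ).analyticAt _).fun_comp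
      (hgan 0 hOU)
  have hnan : AnalyticAt ℝ (fun x => ‖gradient f x‖ ^ 2) 0 := by
    simp only [EuclideanSpace.real_norm_sq_eq]
    exact Finset.analyticAt_fun_sum _ fun i _ => (hcoan i).fun_pow 2
  have hco : ∀ i, ∃ l, Tendsto (fun s => (‖gradient f (γ s)‖)⁻¹ * gradient f (γ s) i)
      (𝓝[<] L) (𝓝 l) := by
    intro i
    refine aux_coord hL (fun s => gradient f (γ s) i) (fun s => ‖gradient f (γ s)‖)
      ?_ hcont.norm (fun s hs => norm_pos_iff.2 (hne s hs)) ?_ (hosc _ (hcoan i)) ?_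
    · exact (EuclideanSpace.proj i : EuclideanSpace ℝ (Fin n) →L[ℝ] ℝ).continuous.comp_continuousOn
        hcont
    · intro s
      rw [EuclideanSpace.real_norm_sq_eq]
      exact Finset.single_le_sum (f := fun i => gradient f (γ s) i ^ 2)
        (fun j _ => sq_nonneg _) (Finset.mem_univ i)
    · intro c
      exact hosc (fun x => gradient f x i ^ 2 - c * ‖gradient f x‖ ^ 2)
        (((hcoan i).fun_pow 2).fun_sub (analyticAt_const.fun_mul hnan))
  choose l hl using hco
  have hu : Tendsto (fun s => ‖gradient f (γ s)‖⁻¹ • gradient f (γ s)) (𝓝[<] L)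
      (𝓝 (WithLp.toLp 2 l)) := by
    have h1 : Tendsto (fun s => fun i => (‖gradient f (γ s)‖)⁻¹ * gradient f (γ s) i)
      (𝓝[<] L) (𝓝 l) := tendsto_pi_nhds.2 hl
    exact ((PiLp.continuous_toLp 2 (fun _ : Fin n => ℝ)).tendsto l).comp h1
  have hw : ‖(WithLp.toLp 2 l : EuclideanSpace ℝ (Fin n))‖ = 1 := by
    refine tendsto_nhds_unique hu.norm (tendsto_const_nhds.congr' ?_)
    filter_upwards [hmem] with s hs
    rw [norm_smul, norm_inv, norm_norm, inv_mul_cancel₀ (norm_ne_zero_iff.2 (hne s hs))]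
  have hνw := aux_secant hL γ _ _ ν (fun s hs => hγode s ⟨hs.1.le, hs.2⟩) hγlim hu hw hνlim
  have h0 : Tendsto (fun s => gradient f (γ s)) (𝓝[<] L) (𝓝 0) := by
    have := (hgan 0 hOU).continuousAt.tendsto
    rw [hgf0] at this
    exact this.comp hγlim
  have key := aux_core hL _ (fun s => fderiv ℝ (gradient f) (γ s)) H _ hne hd h0 hu hw Hnorm hHlim
  rw [hνw]
  refine ⟨⟪H (WithLp.toLp 2 l), WithLp.toLp 2 l⟫, ?_⟩
  rw [map_neg, smul_neg]
  exact congrArg Neg.neg key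
end

section
/- If γ is non-oscillating at O, then along γ the Hessian applied to the unit gradient is asymptotically parallel to the unit gradient: ⟨Hs(f)(x)·ν_f(x), ν_f(x)⟩ ≠ 0 for x on γ near O, and |Hs(f)(x)·ν_f(x) − ⟨Hs(f)(x)·ν_f(x), ν_f(x)⟩·ν_f(x)| = o(|⟨Hs(f)(x)·ν_f(x), ν_f(x)⟩|) as x → O along γ. -/
open scoped RealInnerProductSpace Topology
open Filter

lemma aux_sign_s6 (L : ℝ) (hL : 0 < L) (h : ℝ → ℝ) (hc : ContinuousOn h (Set.Ico 0 L))
    (hne : ∀ᶠ s in 𝓝[<] L, h s ≠ 0) :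
    (∀ᶠ s in 𝓝[<] L, 0 < h s) ∨ (∀ᶠ s in 𝓝[<] L, h s < 0) := by
  have hI : ∀ᶠ s in 𝓝[<] L, s ∈ Set.Ico (0 : ℝ) L := Ico_mem_nhdsLT hL
  obtain ⟨a, ha, hs⟩ := (mem_nhdsLT_iff_exists_Ioo_subset).1 (hne.and hI)
  have hpre : IsPreconnected (Set.Ioo a L) := isPreconnected_Ioo
  have hcont : ContinuousOn h (Set.Ioo a L) := hc.mono fun s hs' => (hs hs').2
  have hev : ∀ᶠ s in 𝓝[<] L, s ∈ Set.Ioo a L := Ioo_mem_nhdsLT ha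
  by_cases hp : ∀ s ∈ Set.Ioo a L, 0 < h s
  · left
    filter_upwards [hev] with s hs' using hp s hs'
  · right
    push Not at hp
    obtain ⟨s0, hs0, h0⟩ := hp
    filter_upwards [hev] with s hs'
    by_contra hcon
    push Not at hcon
    obtain ⟨t, ht, ht0⟩ := hpre.intermediate_value hs0 hs' hcont ⟨h0, hcon⟩
    exact (hs ht).1 ht0

lemma aux_bot (L : ℝ) (φ φ' : ℝ → ℝ) (hd : ∀ᶠ s in 𝓝[<] L, HasDerivAt φ (φ' s) s)
    (hp : ∀ᶠ s in 𝓝[<] L, 0 ≤ φ' s) (hlim : Tendsto φ (𝓝[<] L) atBot) : False := by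
  obtain ⟨a, ha, hs⟩ := (mem_nhdsLT_iff_exists_Ioo_subset).1 (hd.and hp)
  have ha' : a < L := ha
  have hmono : MonotoneOn φ (Set.Ioo a L) := by
    apply monotoneOn_of_deriv_nonneg (convex_Ioo a L)
    · exact fun s h => (hs h).1.continuousAt.continuousWithinAt
    · rw [interior_Ioo]
      exact fun s h => (hs h).1.differentiableAt.differentiableWithinAt
    · rw [interior_Ioo]
      intro s h
      rw [(hs h).1.deriv]
      exact (hs h).2
  obtain ⟨m, hm1, hm2⟩ := exists_between ha'
  have h1 : ∀ᶠ s in 𝓝[<] L, s ∈ Set.Ioo m L := Ioo_mem_nhdsLT hm2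
  have h2 := hlim.eventually (eventually_lt_atBot (φ m))
  obtain ⟨s, hs1, hs2⟩ := (h1.and h2).exists
  have := hmono ⟨hm1, hm2⟩ ⟨hm1.trans hs1.1, hs1.2⟩ hs1.1.le
  linarith

/-- along a non-oscillating trajectory the Hessian applied to the unit gradient is
asymptotically parallel to the unit gradient. -/
theorem hessian_unit_gradient_asymptotically_parallel
    {n : ℕ} (hn : 2 ≤ n)
    (U : Set (EuclideanSpace ℝ (Fin n))) (hUopen : IsOpen U)
    (hOU : (0 : EuclideanSpace ℝ (Fin n)) ∈ U)
    (f : EuclideanSpace ℝ (Fin n) → ℝ)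
    (hfan : AnalyticOnNhd ℝ f U) (hf0 : f 0 = 0) (hgf0 : gradient f 0 = 0)
    (L : ℝ) (hL : 0 < L)
    (γ : ℝ → EuclideanSpace ℝ (Fin n))
    (hγU : ∀ s ∈ Set.Ico (0 : ℝ) L, γ s ∈ U)
    (hγreg : ∀ s ∈ Set.Ico (0 : ℝ) L, gradient f (γ s) ≠ 0)
    (hγode : ∀ s ∈ Set.Ico (0 : ℝ) L,
      HasDerivAt γ (‖gradient f (γ s)‖⁻¹ • gradient f (γ s)) s)
    (hfneg : f (γ 0) < 0)
    (hfmono : StrictMonoOn (fun s => f (γ s)) (Set.Ico (0 : ℝ) L))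
    (hγlim : Tendsto γ (𝓝[<] L) (𝓝 0))
    (hosc : ∀ g : EuclideanSpace ℝ (Fin n) → ℝ, AnalyticAt ℝ g 0 →
      (∀ᶠ s in 𝓝[<] L, g (γ s) = 0) ∨ (∀ᶠ s in 𝓝[<] L, g (γ s) ≠ 0))
    :
    (∀ᶠ s in 𝓝[<] L,
      ⟪fderiv ℝ (gradient f) (γ s) (‖gradient f (γ s)‖⁻¹ • gradient f (γ s)),
        ‖gradient f (γ s)‖⁻¹ • gradient f (γ s)⟫ ≠ 0) ∧
    (fun s =>
        fderiv ℝ (gradient f) (γ s) (‖gradient f (γ s)‖⁻¹ • gradient f (γ s)) -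
          ⟪fderiv ℝ (gradient f) (γ s) (‖gradient f (γ s)‖⁻¹ • gradient f (γ s)),
            ‖gradient f (γ s)‖⁻¹ • gradient f (γ s)⟫ •
            (‖gradient f (γ s)‖⁻¹ • gradient f (γ s)))
      =o[𝓝[<] L] fun s =>
        ⟪fderiv ℝ (gradient f) (γ s) (‖gradient f (γ s)‖⁻¹ • gradient f (γ s)),
          ‖gradient f (γ s)‖⁻¹ • gradient f (γ s)⟫ := by

  set G := gradient f with hG
  have hGan : AnalyticOnNhd ℝ G U := by
    have h1 := hfan.fderiv
    have h2 := ((InnerProductSpace.toDual ℝ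
      (EuclideanSpace ℝ (Fin n))).symm.toContinuousLinearEquiv.toContinuousLinearMap).comp_analyticOnNhd h1
    exact h2
  have hHan : AnalyticOnNhd ℝ (fderiv ℝ G) U := hGan.fderiv
  have hHGan : AnalyticOnNhd ℝ (fun x => fderiv ℝ G x (G x)) U := fun x hx =>
    (ContinuousLinearMap.analyticAt_bilinear (ContinuousLinearMap.id ℝ
      (EuclideanSpace ℝ (Fin n) →L[ℝ] EuclideanSpace ℝ (Fin n))) _).comp₂ (hHan x hx) (hGan x hx)
  have hcoord : ∀ (F : EuclideanSpace ℝ (Fin n) → EuclideanSpace ℝ (Fin n)),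
      AnalyticOnNhd ℝ F U → ∀ i, AnalyticOnNhd ℝ (fun x => F x i) U := by
    intro F hF i
    exact (EuclideanSpace.proj i : EuclideanSpace ℝ (Fin n) →L[ℝ] ℝ).comp_analyticOnNhd hF
  have hinner : ∀ (F K : EuclideanSpace ℝ (Fin n) → EuclideanSpace ℝ (Fin n)),
      AnalyticOnNhd ℝ F U → AnalyticOnNhd ℝ K U → AnalyticOnNhd ℝ (fun x => ⟪F x, K x⟫) U := by
    intro F K hF hK x hx
    exact (ContinuousLinearMap.analyticAt_bilinear
      (innerSL ℝ (E := EuclideanSpace ℝ (Fin n))) _).comp₂ (hF x hx) (hK x hx)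
  set N : EuclideanSpace ℝ (Fin n) → ℝ := fun x => ⟪G x, G x⟫ with hN
  set Q : EuclideanSpace ℝ (Fin n) → ℝ := fun x => ⟪fderiv ℝ G x (G x), G x⟫ with hQ
  set M : Fin n → EuclideanSpace ℝ (Fin n) → ℝ :=
    fun i x => N x * (fderiv ℝ G x (G x)) i - Q x * (G x) i with hM
  have hNan : AnalyticOnNhd ℝ N U := hinner _ _ hGan hGan
  have hQan : AnalyticOnNhd ℝ Q U := hinner _ _ hHGan hGan
  have hMan : ∀ i, AnalyticOnNhd ℝ (M i) U := fun i =>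
    (hNan.mul (hcoord _ hHGan i)).sub (hQan.mul (hcoord _ hGan i))
  have hI : ∀ᶠ s in 𝓝[<] L, s ∈ Set.Ico (0 : ℝ) L := Ico_mem_nhdsLT hL
  -- trichotomy
  have htri : ∀ g : EuclideanSpace ℝ (Fin n) → ℝ, AnalyticOnNhd ℝ g U →
      (∀ᶠ s in 𝓝[<] L, g (γ s) = 0) ∨ (∀ᶠ s in 𝓝[<] L, 0 < g (γ s)) ∨
      (∀ᶠ s in 𝓝[<] L, g (γ s) < 0) := by
    intro g hg
    rcases hosc g (hg 0 hOU) with h | h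
    · exact Or.inl h
    · right
      refine aux_sign_s6 L hL (fun s => g (γ s)) ?_ h
      intro s hs
      exact ((hg _ (hγU s hs)).continuousAt.comp (hγode s hs).continuousAt).continuousWithinAt
  -- pointwise quantities
  set u : ℝ → ℝ := fun s => ‖G (γ s)‖ with hu
  set q : ℝ → ℝ := fun s => ⟪fderiv ℝ G (γ s) (‖G (γ s)‖⁻¹ • G (γ s)),
        ‖G (γ s)‖⁻¹ • G (γ s)⟫ with hq
  set T : ℝ → EuclideanSpace ℝ (Fin n) := fun s =>
    fderiv ℝ G (γ s) (‖G (γ s)‖⁻¹ • G (γ s)) - q s • (‖G (γ s)‖⁻¹ • G (γ s)) with hT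
  have hupos : ∀ s ∈ Set.Ico (0 : ℝ) L, 0 < u s := fun s hs => norm_pos_iff.2 (hγreg s hs)
  have hNu : ∀ s, N (γ s) = u s ^ 2 := fun s => real_inner_self_eq_norm_sq _
  have hqQ : ∀ s ∈ Set.Ico (0 : ℝ) L, q s = Q (γ s) / u s ^ 2 := by
    intro s hs
    have := (hupos s hs).ne'
    simp only [hq, hQ, map_smul, inner_smul_left, inner_smul_right]
    simp only [hu] at this ⊢
    simp
    field_simp
  have hTM : ∀ s ∈ Set.Ico (0 : ℝ) L, ∀ i, T s i = M i (γ s) / u s ^ 3 := by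
    intro s hs i
    have h0 := (hupos s hs).ne'
    have h1 := hqQ s hs
    have h2 : T s i = (u s)⁻¹ * (fderiv ℝ G (γ s) (G (γ s))) i - q s * ((u s)⁻¹ * (G (γ s)) i) := by
      simp [hT, hu]
    rw [h2, h1]
    simp only [hM, hNu]
    field_simp
  have hGd : ∀ s ∈ Set.Ico (0 : ℝ) L, HasDerivAt (fun s => G (γ s))
      (fderiv ℝ G (γ s) (‖G (γ s)‖⁻¹ • G (γ s))) s := by
    intro s hs
    exact (hGan _ (hγU s hs)).differentiableAt.hasFDerivAt.comp_hasDerivAt s (hγode s hs)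
  have hud : ∀ s ∈ Set.Ico (0 : ℝ) L, HasDerivAt u (q s) s := by
    intro s hs
    have h0 := (hupos s hs)
    have h1 := (hGd s hs).norm_sq
    have h2 := h1.sqrt (by exact pow_ne_zero 2 h0.ne')
    have h3 : (fun s => Real.sqrt (‖G (γ s)‖ ^ 2)) = u := by
      funext t; exact Real.sqrt_sq (norm_nonneg _)
    rw [h3] at h2
    convert h2 using 1
    rw [Real.sqrt_sq (norm_nonneg _)]
    simp only [hq]
    rw [inner_smul_right, real_inner_comm]
    simp only [hu] at h0
    simp
    field_simp
  have hνd : ∀ s ∈ Set.Ico (0 : ℝ) L, ∀ i,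
      HasDerivAt (fun s => (G (γ s)) i / u s) (T s i / u s) s := by
    intro s hs i
    have h0 := (hupos s hs).ne'
    have h1 : HasDerivAt (fun s => (G (γ s)) i)
        ((u s)⁻¹ * (fderiv ℝ G (γ s) (G (γ s))) i) s := by
      have h := (EuclideanSpace.proj i : EuclideanSpace ℝ (Fin n) →L[ℝ] ℝ).hasFDerivAt.comp_hasDerivAt
        s (hGd s hs)
      refine HasDerivAt.congr_deriv h ?_
      simp [hu]
    have h3 : T s i = (u s)⁻¹ * (fderiv ℝ G (γ s) (G (γ s))) i - q s * ((u s)⁻¹ * (G (γ s)) i) := by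
      simp [hT, hu]
    refine HasDerivAt.congr_deriv (h1.fun_div (hud s hs) h0) ?_
    rw [h3]
    field_simp
  have hνb : ∀ s ∈ Set.Ico (0 : ℝ) L, ∀ i, |(G (γ s)) i / u s| ≤ 1 := by
    intro s hs i
    rw [abs_div, abs_of_pos (hupos s hs), div_le_one (hupos s hs)]
    exact PiLp.norm_apply_le (G (γ s)) i
  have hlogd : ∀ s ∈ Set.Ico (0 : ℝ) L, HasDerivAt (fun s => Real.log (u s)) (q s / u s) s :=
    fun s hs => (hud s hs).log (hupos s hs).ne'
  have hu0 : Tendsto u (𝓝[<] L) (𝓝[>] 0) := by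
    refine tendsto_nhdsWithin_iff.2 ⟨?_, hI.mono hupos⟩
    have h1 : Tendsto (fun s => ‖G (γ s)‖) (𝓝[<] L) (𝓝 ‖G 0‖) :=
      ((hGan 0 hOU).continuousAt.tendsto.comp hγlim).norm
    rwa [hgf0, norm_zero] at h1
  have hlog : Tendsto (fun s => Real.log (u s)) (𝓝[<] L) atBot :=
    Real.tendsto_log_nhdsGT_zero.comp hu0
  have hQne : ∀ᶠ s in 𝓝[<] L, Q (γ s) ≠ 0 := by
    rcases hosc Q (hQan 0 hOU) with h | h
    · exfalso
      refine aux_bot L _ _ (hI.mono hlogd) ?_ hlog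
      filter_upwards [h, hI] with s h1 h2
      rw [hqQ s h2, h1]; simp
    · exact h
  refine ⟨?_, ?_⟩
  · filter_upwards [hQne, hI] with s h1 h2
    change q s ≠ 0
    rw [hqQ s h2]
    exact div_ne_zero h1 (pow_ne_zero 2 (hupos s h2).ne')
  change T =o[𝓝[<] L] q
  have key : ∀ i, (fun s => T s i) =o[𝓝[<] L] q := by
    intro i
    rw [Asymptotics.isLittleO_iff]
    intro c hc
    have hgid : ∀ s ∈ Set.Ico (0 : ℝ) L, M i (γ s) ^ 2 - c ^ 2 * (Q (γ s) ^ 2 * N (γ s)) =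
        u s ^ 6 * ((T s i) ^ 2 - (c * q s) ^ 2) := by
      intro s hs
      have h0 := (hupos s hs).ne'
      rw [hTM s hs i, hqQ s hs, hNu]
      field_simp
    have hgan : AnalyticOnNhd ℝ
        (fun x => M i x ^ 2 - c ^ 2 * (Q x ^ 2 * N x)) U :=
      ((hMan i).pow 2).sub (analyticOnNhd_const.mul ((hQan.pow 2).mul hNan))
    have hle : ∀ s ∈ Set.Ico (0 : ℝ) L,
        M i (γ s) ^ 2 - c ^ 2 * (Q (γ s) ^ 2 * N (γ s)) ≤ 0 → ‖T s i‖ ≤ c * ‖q s‖ := by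
      intro s hs h
      rw [hgid s hs] at h
      have h6 : 0 < u s ^ 6 := pow_pos (hupos s hs) 6
      have h7 : (T s i) ^ 2 ≤ (c * q s) ^ 2 := by
        by_contra hcon
        push Not at hcon
        have := mul_pos h6 (sub_pos.2 hcon)
        linarith
      have := sq_le_sq.1 h7
      rwa [abs_mul, abs_of_pos hc] at this
    have hgt : (∀ᶠ s in 𝓝[<] L, 0 < M i (γ s) ^ 2 - c ^ 2 * (Q (γ s) ^ 2 * N (γ s))) → False := by
      intro h
      have hT2 : ∀ᶠ s in 𝓝[<] L, c * |q s| < |T s i| := by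
        filter_upwards [h, hI] with s h1 hs
        rw [hgid s hs] at h1
        have h6 : 0 < u s ^ 6 := pow_pos (hupos s hs) 6
        have h7 := pos_of_mul_pos_right h1 h6.le
        have h8 := sq_lt_sq.1 (sub_pos.1 h7)
        rwa [abs_mul, abs_of_pos hc] at h8
      -- common argument for both signs
      have hfin : ∀ σ : ℝ, |σ| = 1 → (∀ᶠ s in 𝓝[<] L, σ * T s i = |T s i|) → False := by
        intro σ hσ hs
        refine aux_bot L (fun s => σ * ((G (γ s)) i / u s) + c * Real.log (u s))
          (fun s => σ * (T s i / u s) + c * (q s / u s)) ?_ ?_ ?_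
        · filter_upwards [hI] with s hs
          exact ((hνd s hs i).const_mul σ).add ((hlogd s hs).const_mul c)
        · filter_upwards [hI, hs, hT2] with s h1 h2 h3
          have : σ * (T s i / u s) + c * (q s / u s) = (σ * T s i + c * q s) / u s := by ring
          rw [this, h2]
          apply div_nonneg _ (hupos s h1).le
          have := neg_abs_le (q s)
          nlinarith
        · refine tendsto_atBot_add_left_of_ge' _ 1 ?_ (hlog.const_mul_atBot hc)
          filter_upwards [hI] with s hs
          refine (le_abs_self _).trans ?_
          rw [abs_mul, hσ, one_mul]
          exact hνb s hs i
      rcases htri (M i) (hMan i) with h1 | h1 | h1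
      · have : ∀ᶠ s in 𝓝[<] L, False := by
          filter_upwards [h1, hT2, hI] with s h1 h2 hs
          rw [hTM s hs i, h1, zero_div, abs_zero] at h2
          have := mul_nonneg hc.le (abs_nonneg (q s))
          linarith
        exact this.exists.elim fun _ h => h
      · refine hfin 1 (by simp) ?_
        filter_upwards [h1, hI] with s h1 hs
        rw [one_mul, abs_of_pos]
        rw [hTM s hs i]
        exact div_pos h1 (pow_pos (hupos s hs) 3)
      · refine hfin (-1) (by simp) ?_
        filter_upwards [h1, hI] with s h1 hs
        rw [abs_of_neg]
        · ring
        rw [hTM s hs i]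
        exact div_neg_of_neg_of_pos h1 (pow_pos (hupos s hs) 3)
    rcases htri _ hgan with h | h | h
    · filter_upwards [h, hI] with s h1 hs using hle s hs h1.le
    · exact (hgt h).elim
    · filter_upwards [h, hI] with s h1 hs using hle s hs h1.le
  have hsum : (fun s => ∑ i, ‖T s i‖) =o[𝓝[<] L] q :=
    Asymptotics.IsLittleO.fun_sum fun i _ => (key i).norm_left
  refine Asymptotics.IsBigO.trans_isLittleO (Asymptotics.IsBigO.of_bound 1 ?_) hsum
  refine Eventually.of_forall fun s => ?_
  rw [one_mul]
  refine le_trans ?_ (le_abs_self _)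
  rw [EuclideanSpace.norm_eq]
  refine Real.sqrt_le_iff.2 ⟨Finset.sum_nonneg fun i _ => norm_nonneg _, ?_⟩
  exact Finset.sum_sq_le_sq_sum_of_nonneg fun i _ => norm_nonneg _
end

section
/- There exist a constant C > 0 and an open neighborhood V ⊆ U of the origin O such that for all x ∈ V one has |x|·|Hs(f)(x)·∇f(x)| ≥ C·|∇f(x)|² (the Bochnak–Łojasiewicz inequality applied to the function |∇f|). -/
open scoped RealInnerProductSpace Topology
open Filter

namespace BL

/-- The Hadamard division lemma in the analytic category. -/
lemma hadamard {X : Type*} [NormedAddCommGroup X] [NormedSpace ℝ X] {F : X × ℝ → ℝ}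
    (hF : AnalyticAt ℝ F 0) :
    ∃ H : X × ℝ → ℝ, AnalyticAt ℝ H 0 ∧ ∀ᶠ z in 𝓝 (0 : X × ℝ), F z = F (z.1, 0) + z.2 * H z := by
  obtain ⟨p, r, hp⟩ := hF
  let π : X × ℝ →L[ℝ] X × ℝ := (ContinuousLinearMap.fst ℝ X ℝ).prod 0
  let e : X × ℝ := (0, 1)
  have hπ : ‖π‖ ≤ 1 := by
    refine ContinuousLinearMap.opNorm_le_bound _ zero_le_one ?_
    rintro ⟨x, y⟩
    simp [π, Prod.norm_def]
  have he : ‖e‖ = 1 := by simp [e, Prod.norm_def]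
  let L : (m : ℕ) → Fin (m+1) → Fin (m+1) → (X × ℝ →L[ℝ] X × ℝ) :=
    fun m j i => if i < j then π else ContinuousLinearMap.id ℝ _
  have hL : ∀ m j i, ‖L m j i‖ ≤ 1 := by
    intro m j i
    simp only [L]
    split_ifs
    · exact hπ
    · exact ContinuousLinearMap.norm_id_le
  let q : FormalMultilinearSeries ℝ (X × ℝ) ℝ := fun m =>
    ∑ j : Fin (m+1), ((p (m+1)).compContinuousLinearMap (L m j)).curryMid j e
  have hqn : ∀ m, ‖q m‖ ≤ (m+1) * ‖p (m+1)‖ := by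
    intro m
    refine (norm_sum_le _ _).trans ?_
    have : ∀ j ∈ (Finset.univ : Finset (Fin (m+1))),
        ‖((p (m+1)).compContinuousLinearMap (L m j)).curryMid j e‖ ≤ ‖p (m+1)‖ := by
      intro j _
      refine (ContinuousLinearMap.le_opNorm _ _).trans ?_
      rw [he, mul_one, ContinuousMultilinearMap.norm_curryMid]
      refine (ContinuousMultilinearMap.norm_compContinuousLinearMap_le _ _).trans ?_
      have : ∏ i, ‖L m j i‖ ≤ 1 := Finset.prod_le_one (fun _ _ => norm_nonneg _) (fun i _ => hL m j i)
      nlinarith [norm_nonneg (p (m+1))]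
    refine (Finset.sum_le_sum this).trans ?_
    simp
  have hqv : ∀ m (z : X × ℝ), z.2 * q m (fun _ => z) =
      p (m+1) (fun _ => z) - p (m+1) (fun _ => π z) := by
    intro m z
    let T : ℕ → ℝ := fun j => p (m+1) (fun i => if (i : ℕ) < j then π z else z)
    have hT : ∀ j : Fin (m+1), z.2 * ((p (m+1)).compContinuousLinearMap (L m j)).curryMid j e
        (fun _ => z) = T j - T (j+1) := by
      intro j
      have h0 : ∀ i, (if i < (j:ℕ) + 1 then π z else z) = if i < (j : ℕ) then π z else if i = (j:ℕ) then π z else z := by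
        intro i; split_ifs <;> first | rfl | omega
      set v : Fin (m+1) → X × ℝ := fun i => if (i : ℕ) < j then π z else z with hv
      have h1 : T j = p (m+1) (Function.update v j z) := by
        simp only [T]; congr 1; ext1 i
        by_cases h : i = j
        · subst h; simp
        · simp [h, hv]
      have h2 : T (j+1) = p (m+1) (Function.update v j (π z)) := by
        simp only [T]; congr 1; ext1 i
        by_cases h : i = j
        · subst h; simp
        · have : (i : ℕ) ≠ j := fun hh => h (Fin.ext hh)
          rw [Function.update_of_ne h, h0, if_neg this]
      have h3 : ((p (m+1)).compContinuousLinearMap (L m j)).curryMid j e (fun _ => z)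
          = p (m+1) (Function.update v j e) := by
        rw [ContinuousMultilinearMap.curryMid_apply]
        simp only [ContinuousMultilinearMap.compContinuousLinearMap_apply]
        congr 1; ext1 i
        by_cases h : i = j
        · subst h; simp [L]
        · rw [Function.update_of_ne h]
          obtain ⟨k, rfl⟩ := Fin.exists_succAbove_eq h
          simp only [Fin.insertNth_apply_succAbove, hv, L]
          split_ifs with h1 h2 h2
          · rfl
          · exact absurd h1 h2
          · exact absurd h2 h1
          · rfl
      rw [h1, h2, h3, ← ContinuousMultilinearMap.map_update_sub, ← smul_eq_mul, ← ContinuousMultilinearMap.map_update_smul]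
      congr 2
      ext <;> simp [π, e]
    have : q m (fun _ => z) = ∑ j : Fin (m+1), ((p (m+1)).compContinuousLinearMap (L m j)).curryMid j e
        (fun _ => z) := by
      simp only [q, ContinuousMultilinearMap.sum_apply]
    rw [this, Finset.mul_sum, Finset.sum_congr rfl (fun j _ => hT j),
      Fin.sum_univ_eq_sum_range (fun j => T j - T (j+1)), Finset.sum_range_sub']
    simp only [T]
    congr 1
    · congr 1
      ext1 i
      have := i.2
      simp
      omega
  have hqr : 0 < q.radius := by
    obtain ⟨s, hs0, hs⟩ := ENNReal.lt_iff_exists_nnreal_btwn.1 (hp.r_pos.trans_le hp.r_le)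
    have hs0' : 0 < s := by exact_mod_cast hs0
    obtain ⟨C, hC, hb⟩ := p.norm_mul_pow_le_of_lt_radius hs
    have : ((s/2 : NNReal) : ENNReal) ≤ q.radius := by
      refine q.le_radius_of_bound (C / s) ?_
      intro m
      have h1 := hb (m+1)
      have h2 := hqn m
      have hs' : (0:ℝ) < s := by exact_mod_cast hs0'
      have h3 : ((m:ℝ)+1) ≤ 2^m := by
        have : m + 1 ≤ 2^m := Nat.lt_two_pow_self
        exact_mod_cast this
      rw [le_div_iff₀ hs']
      push_cast
      rw [div_pow]
      calc ‖q m‖ * ((s:ℝ)^m/2^m) * s ≤ ((m+1) * ‖p (m+1)‖) * ((s:ℝ)^m/2^m) * s := by gcongr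
        _ = ((m+1)/2^m) * (‖p (m+1)‖ * (s:ℝ)^(m+1)) := by ring
        _ ≤ 1 * (‖p (m+1)‖ * (s:ℝ)^(m+1)) := by
            gcongr
            rw [div_le_one (by positivity)]; exact h3
        _ ≤ C := by linarith
    refine lt_of_lt_of_le ?_ this
    exact_mod_cast (by positivity : 0 < s/2)
  have hq := q.hasFPowerSeriesOnBall hqr
  refine ⟨q.sum, hq.analyticAt, ?_⟩
  have e1 : ∀ᶠ z in 𝓝 (0 : X × ℝ), z ∈ Metric.eball (0 : X × ℝ) r := Metric.eball_mem_nhds _ hp.r_pos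
  have e2 : ∀ᶠ z in 𝓝 (0 : X × ℝ), π z ∈ Metric.eball (0 : X × ℝ) r := by
    have : Tendsto π (𝓝 0) (𝓝 0) := by simpa using π.continuous.tendsto 0
    exact this.eventually (Metric.eball_mem_nhds _ hp.r_pos)
  have e3 : ∀ᶠ z in 𝓝 (0 : X × ℝ), z ∈ Metric.eball (0 : X × ℝ) q.radius := Metric.eball_mem_nhds _ hqr
  filter_upwards [e1, e2, e3] with z h1 h2 h3
  have s1 := hp.hasSum h1
  have s2 := hp.hasSum h2
  have s3 := (hq.hasSum h3).mul_left z.2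
  simp only [zero_add] at s1 s2 s3
  have s4 := s1.sub s2
  have s5 := (hasSum_nat_add_iff' 1).2 s4
  simp only [hqv] at s3
  have h6 := s3.unique s5
  have h7 : p 0 (fun _ => z) = p 0 (fun _ => π z) := by congr 1; ext1 i; exact i.elim0
  simp only [Finset.range_one, Finset.sum_singleton, h7, sub_self, sub_zero] at h6
  have h8 : π z = (z.1, 0) := rfl
  rw [h8] at h6
  linarith

/-- Analytic implicit function theorem. -/
lemma ift {X : Type*} [NormedAddCommGroup X] [NormedSpace ℝ X] [CompleteSpace X] {G : X × ℝ → ℝ}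
    (hG : AnalyticAt ℝ G 0) (h0 : G 0 = 0) (hd : fderiv ℝ G 0 (0, 1) ≠ 0) :
    ∃ a : X → ℝ, AnalyticAt ℝ a 0 ∧ a 0 = 0 ∧ ∀ᶠ x in 𝓝 (0 : X), G (x, a x) = 0 := by
  have hc : ContDiffAt ℝ ⊤ G 0 := hG.contDiffAt
  have hinv : (fderiv ℝ G 0 ∘L .inr ℝ X ℝ).IsInvertible := by
    refine ⟨ContinuousLinearEquiv.unitsEquivAut ℝ (Units.mk0 _ hd), ?_⟩
    ext
    simp
  refine ⟨hc.implicitFunction (by simp) hinv, ?_, ?_, ?_⟩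
  · have := hc.contDiffAt_implicitFunction (by simp) hinv
    exact this.analyticAt
  · exact hc.implicitFunction_apply_self (by simp) hinv
  · have := hc.eventually_apply_implicitFunction (by simp) hinv
    simpa [h0] using this

end BL

namespace BL

attribute [fun_prop] analyticAt_fst analyticAt_snd

section regular
variable {X : Type*} [NormedAddCommGroup X] [NormedSpace ℝ X]

/-- `F` is regular of order `d` in the last variable. -/
def Reg (F : X × ℝ → ℝ) (d : ℕ) : Prop :=
  ∃ U : ℝ → ℝ, AnalyticAt ℝ U 0 ∧ U 0 ≠ 0 ∧ ∀ᶠ y in 𝓝 (0:ℝ), F (0, y) = y ^ d * U y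

lemma tendsto_inr0 : Tendsto (fun y : ℝ => ((0 : X), y)) (𝓝 0) (𝓝 0) := by
  have : Continuous (fun y : ℝ => ((0 : X), y)) := by fun_prop
  exact this.tendsto 0

lemma tendsto_inl0 : Tendsto (fun x : X => (x, (0:ℝ))) (𝓝 0) (𝓝 0) := by
  have : Continuous (fun x : X => (x, (0:ℝ))) := by fun_prop
  exact this.tendsto 0

lemma analyticAt_inr0 {F : X × ℝ → ℝ} (hF : AnalyticAt ℝ F 0) :
    AnalyticAt ℝ (fun y : ℝ => F (0, y)) 0 := by
  have h1 : AnalyticAt ℝ (fun y : ℝ => ((0 : X), y)) 0 := AnalyticAt.prod analyticAt_const analyticAt_id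
  exact AnalyticAt.fun_comp (g := F) (f := fun y : ℝ => ((0 : X), y)) hF h1

lemma analyticAt_inl0 {F : X × ℝ → ℝ} (hF : AnalyticAt ℝ F 0) :
    AnalyticAt ℝ (fun x : X => F (x, 0)) 0 := by
  have h1 : AnalyticAt ℝ (fun x : X => (x, (0:ℝ))) 0 := AnalyticAt.prod analyticAt_id analyticAt_const
  exact AnalyticAt.fun_comp (g := F) (f := fun x : X => (x, (0:ℝ))) hF h1

lemma analyticAt_comp_fst {c : X → ℝ} (hc : AnalyticAt ℝ c 0) :
    AnalyticAt ℝ (fun z : X × ℝ => c z.1) 0 :=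
  AnalyticAt.fun_comp (g := c) (f := fun z : X × ℝ => z.1) hc analyticAt_fst

lemma expand : ∀ (d : ℕ) {F : X × ℝ → ℝ}, AnalyticAt ℝ F 0 → Reg F d →
    ∃ (c : ℕ → X → ℝ) (h : X × ℝ → ℝ), (∀ i, AnalyticAt ℝ (c i) 0) ∧ (∀ i, c i 0 = 0) ∧
      AnalyticAt ℝ h 0 ∧ h 0 ≠ 0 ∧
      ∀ᶠ z in 𝓝 (0 : X × ℝ), F z = ∑ i ∈ Finset.range d, c i z.1 * z.2 ^ i + h z * z.2 ^ d := by
  intro d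
  induction d with
  | zero =>
    rintro F hF ⟨U, hU, hU0, hFU⟩
    refine ⟨fun _ _ => 0, F, fun _ => analyticAt_const, fun _ => rfl, hF, ?_, ?_⟩
    · have := hFU.self_of_nhds
      simp at this
      change F (0,0) ≠ 0
      rw [this]; exact hU0
    · simp
  | succ d ih =>
    rintro F hF ⟨U, hU, hU0, hFU⟩
    obtain ⟨H, hH, hFH⟩ := hadamard hF
    have hF0 : F (0,0) = 0 := by
      have := hFU.self_of_nhds
      simpa using this
    have hreg : Reg H d := by
      refine ⟨U, hU, hU0, ?_⟩
      have hH' := analyticAt_inr0 hH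
      have hR : AnalyticAt ℝ (fun y : ℝ => y^d * U y) 0 := by fun_prop
      refine (hH'.frequently_eq_iff_eventually_eq hR).1 ?_
      apply Eventually.frequently
      have h1 := (tendsto_inr0 (X := X)).eventually hFH
      filter_upwards [nhdsWithin_le_nhds h1, nhdsWithin_le_nhds hFU, self_mem_nhdsWithin] with y h1 h2 h3
      simp only [hF0, zero_add] at h1
      rw [h2, pow_succ'] at h1
      have h3' : y ≠ 0 := h3
      apply mul_left_cancel₀ h3'
      linarith
    obtain ⟨c, h, hc, hc0, hh, hh0, hs⟩ := ih hH hreg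
    refine ⟨fun i => Nat.casesOn i (fun x => F (x, 0)) c, h, ?_, ?_, hh, hh0, ?_⟩
    · rintro (_ | i)
      · exact analyticAt_inl0 hF
      · exact hc i
    · rintro (_ | i)
      · exact hF0
      · exact hc0 i
    · filter_upwards [hFH, hs] with z h1 h2
      rw [h1, h2, Finset.sum_range_succ', mul_add, Finset.mul_sum]
      simp only [pow_zero, mul_one]
      have : ∀ i, z.2 * (c i z.1 * z.2 ^ i) = c i z.1 * z.2 ^ (i+1) := fun i => by ring
      simp only [this]
      have h0 : z.2 * (h z * z.2 ^ d) = h z * z.2 ^ (d+1) := by ring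
      rw [h0]
      change _ = ∑ i ∈ Finset.range d, c i z.1 * z.2 ^ (i+1) + F (z.1, 0) + _
      ring

/-- derivative in the last variable -/
noncomputable def dy (F : X × ℝ → ℝ) (z : X × ℝ) : ℝ := deriv (fun t => F (z.1, t)) z.2

lemma slice {P : X × ℝ → Prop} (h : ∀ᶠ z in 𝓝 (0 : X × ℝ), P z) :
    ∀ᶠ z in 𝓝 (0 : X × ℝ), ∀ᶠ t in 𝓝 z.2, P (z.1, t) := by
  filter_upwards [eventually_eventually_nhds.2 h] with z hz
  have : Continuous (fun t : ℝ => (z.1, t)) := by fun_prop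
  exact (this.tendsto z.2).eventually hz

lemma dy_congr {F G : X × ℝ → ℝ} (h : ∀ᶠ z in 𝓝 (0 : X × ℝ), F z = G z) :
    ∀ᶠ z in 𝓝 (0 : X × ℝ), dy F z = dy G z := by
  filter_upwards [slice h] with z hz
  exact EventuallyEq.deriv_eq hz

lemma dy_iter_congr (e : ℕ) {F G : X × ℝ → ℝ} (h : ∀ᶠ z in 𝓝 (0 : X × ℝ), F z = G z) :
    ∀ᶠ z in 𝓝 (0 : X × ℝ), dy^[e] F z = dy^[e] G z := by
  induction e generalizing F G with
  | zero => simpa using h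
  | succ e ih => simpa only [Function.iterate_succ_apply] using ih (dy_congr h)

lemma hasDerivAt_slice {F : X × ℝ → ℝ} {z : X × ℝ} (h : DifferentiableAt ℝ F z) :
    HasDerivAt (fun t => F (z.1, t)) (fderiv ℝ F z (0,1)) z.2 := by
  have h1 : HasDerivAt (fun t : ℝ => (z.1, t)) ((0:X), (1:ℝ)) z.2 :=
    (hasDerivAt_const _ _).prodMk (hasDerivAt_id _)
  exact HasFDerivAt.comp_hasDerivAt (l := F) z.2 h.hasFDerivAt h1

lemma eventually_diff {E : Type*} [NormedAddCommGroup E] [NormedSpace ℝ E] {F : E → ℝ} {x : E} (h : AnalyticAt ℝ F x) :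
    ∀ᶠ z in 𝓝 x, DifferentiableAt ℝ F z :=
  h.eventually_analyticAt.mono fun _ h => h.differentiableAt

lemma dy_analytic {F : X × ℝ → ℝ} (h : AnalyticAt ℝ F 0) : AnalyticAt ℝ (dy F) 0 := by
  have h1 : AnalyticAt ℝ (fun z => fderiv ℝ F z (0,1)) 0 := by
    exact ((ContinuousLinearMap.apply ℝ ℝ ((0:X),(1:ℝ))).analyticAt _).comp h.fderiv
  refine h1.congr ?_
  filter_upwards [eventually_diff h] with z hz
  exact (hasDerivAt_slice hz).deriv.symm

lemma dy_iter_analytic (e : ℕ) {F : X × ℝ → ℝ} (h : AnalyticAt ℝ F 0) : AnalyticAt ℝ (dy^[e] F) 0 := by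
  induction e generalizing F with
  | zero => simpa using h
  | succ e ih => simpa only [Function.iterate_succ_apply] using ih (dy_analytic h)

lemma dy_reg {F : X × ℝ → ℝ} {e : ℕ} (hr : Reg F (e+1)) : Reg (dy F) e := by
  obtain ⟨U, hU, hU0, hFU⟩ := hr
  refine ⟨fun y => (e+1) * U y + y * deriv U y, ?_, ?_, ?_⟩
  · have := hU.deriv
    fun_prop
  · simp only [zero_mul, add_zero]
    positivity
  · filter_upwards [eventually_eventually_nhds.2 hFU, eventually_diff hU] with y hy hd
    have h1 : dy F (0, y) = deriv (fun y => y^(e+1) * U y) y := EventuallyEq.deriv_eq hy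
    rw [h1]
    have h2 := (hasDerivAt_pow (e+1) y).mul hd.hasDerivAt
    refine h2.deriv.trans ?_
    push_cast
    ring

lemma dy_iter_reg (e : ℕ) {F : X × ℝ → ℝ} {m : ℕ} (hr : Reg F (m + e)) : Reg (dy^[e] F) m := by
  induction e generalizing F with
  | zero => simpa using hr
  | succ e ih =>
    rw [Function.iterate_succ_apply]
    exact ih (dy_reg hr)

lemma dy_translate (a : X → ℝ) (F : X × ℝ → ℝ) :
    dy (fun z => F (z.1, a z.1 + z.2)) = fun z => dy F (z.1, a z.1 + z.2) := by
  ext z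
  exact deriv_comp_const_add (f := fun t => F (z.1, t)) (a z.1) z.2

lemma dy_iter_translate (e : ℕ) (a : X → ℝ) (F : X × ℝ → ℝ) :
    dy^[e] (fun z => F (z.1, a z.1 + z.2)) = fun z => (dy^[e] F) (z.1, a z.1 + z.2) := by
  induction e generalizing F with
  | zero => rfl
  | succ e ih =>
    rw [Function.iterate_succ_apply, dy_translate, ih, Function.iterate_succ_apply]

lemma coeff_dy : ∀ (e : ℕ) {F h : X × ℝ → ℝ} {c : ℕ → X → ℝ}, AnalyticAt ℝ h 0 →
    (∀ᶠ z in 𝓝 (0 : X × ℝ), F z = ∑ i ∈ Finset.range (e+1), c i z.1 * z.2 ^ i + h z * z.2 ^ (e+1)) →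
    ∀ᶠ x in 𝓝 (0 : X), dy^[e] F (x, 0) = e.factorial * c e x := by
  intro e
  induction e with
  | zero =>
    intro F h c hh hF
    filter_upwards [tendsto_inl0.eventually hF] with x hx
    simp [hx]
  | succ e ih =>
    intro F h c hh hF
    have key : ∀ᶠ z in 𝓝 (0 : X × ℝ), dy F z = ∑ i ∈ Finset.range (e+1), ((i+1:ℝ) * c (i+1) z.1) * z.2 ^ i
        + ((e+2) * h z + z.2 * dy h z) * z.2 ^ (e+1) := by
      filter_upwards [slice hF, eventually_diff hh] with z hz hd
      have h1 : dy F z = deriv (fun t => (∑ i ∈ Finset.range (e+1), c (i+1) z.1 * t ^ (i+1)) + c 0 z.1 +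
          h (z.1, t) * t ^ (e+2)) z.2 := by
        refine EventuallyEq.deriv_eq ?_
        filter_upwards [hz] with t ht
        rw [ht, Finset.sum_range_succ']
        simp
      rw [h1]
      have h2 : HasDerivAt (fun t => h (z.1, t)) (dy h z) z.2 := by
        have := hasDerivAt_slice hd
        rw [show dy h z = _ from this.deriv]
        exact this
      have h3 : HasDerivAt (fun t : ℝ => ∑ i ∈ Finset.range (e+1), c (i+1) z.1 * t ^ (i+1))
          (∑ i ∈ Finset.range (e+1), c (i+1) z.1 * (((i+1 : ℕ) : ℝ) * z.2 ^ (i+1-1))) z.2 := by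
        refine HasDerivAt.fun_sum fun i _ => ?_
        exact (hasDerivAt_pow (i+1) z.2).const_mul _
      have h4 := (h3.add_const (c 0 z.1)).add (h2.mul (hasDerivAt_pow (e+2) z.2))
      refine h4.deriv.trans ?_
      have h5 : ∀ i ∈ Finset.range (e+1), c (i+1) z.1 * (((i+1 : ℕ) : ℝ) * z.2 ^ (i+1-1)) =
          ((i+1:ℝ) * c (i+1) z.1) * z.2 ^ i := by
        intro i _
        push_cast
        ring
      rw [Finset.sum_congr rfl h5]
      push_cast
      ring
    have hh' : AnalyticAt ℝ (fun z => (e+2) * h z + z.2 * dy h z) 0 := by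
      have := dy_analytic hh
      fun_prop
    have := ih (c := fun i x => (i+1:ℝ) * c (i+1) x) hh' key
    filter_upwards [this] with x hx
    rw [Function.iterate_succ_apply, hx, Nat.factorial_succ]
    push_cast
    ring

/-- Tschirnhausen transformation. -/
lemma tsch [CompleteSpace X] {F : X × ℝ → ℝ} {e : ℕ} (hF : AnalyticAt ℝ F 0) (hr : Reg F (e+1)) :
    ∃ a : X → ℝ, AnalyticAt ℝ a 0 ∧ a 0 = 0 ∧ ∀ (c : ℕ → X → ℝ) (h : X × ℝ → ℝ), AnalyticAt ℝ h 0 →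
      (∀ᶠ z in 𝓝 (0 : X × ℝ), F (z.1, a z.1 + z.2) =
        ∑ i ∈ Finset.range (e+1), c i z.1 * z.2 ^ i + h z * z.2 ^ (e+1)) →
      ∀ᶠ x in 𝓝 (0 : X), c e x = 0 := by
  have hG := dy_iter_analytic e hF
  have hrG : Reg (dy^[e] F) 1 := dy_iter_reg e (by rwa [add_comm])
  obtain ⟨U, hU, hU0, hGU⟩ := hrG
  have hG0 : dy^[e] F 0 = 0 := by
    have := hGU.self_of_nhds
    change dy^[e] F (0,0) = 0
    simpa using this
  have hGd : fderiv ℝ (dy^[e] F) 0 (0,1) ≠ 0 := by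
    have h1 : HasDerivAt (fun t => dy^[e] F (0,t)) _ 0 := hasDerivAt_slice hG.differentiableAt
    have h2 : HasDerivAt (fun y => y^1 * U y) _ 0 := ((hasDerivAt_pow 1 (0:ℝ))).mul hU.differentiableAt.hasDerivAt
    have h3 := h1.unique (h2.congr_of_eventuallyEq hGU)
    rw [h3]
    simpa using hU0
  obtain ⟨a, ha, ha0, haG⟩ := ift hG hG0 hGd
  refine ⟨a, ha, ha0, ?_⟩
  intro c h hh hs
  have := coeff_dy e hh hs
  rw [dy_iter_translate] at this
  filter_upwards [this, haG] with x h1 h2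
  simp only [add_zero] at h1
  rw [h2] at h1
  have : (e.factorial : ℝ) ≠ 0 := by positivity
  simpa [this] using h1.symm

end regular
end BL

namespace BL

section monomials
variable {N : ℕ}

/-- monomial with exponent `γ` -/
def mono (γ : Fin N → ℕ) (v : Fin N → ℝ) : ℝ := ∏ j, v j ^ γ j

/-- `F` is the monomial with exponent `γ` times a unit, near the origin. -/
def MU (γ : Fin N → ℕ) (F : (Fin N → ℝ) → ℝ) : Prop :=
  ∃ U : (Fin N → ℝ) → ℝ, AnalyticAt ℝ U 0 ∧ U 0 ≠ 0 ∧ ∀ᶠ v in 𝓝 (0 : Fin N → ℝ), F v = mono γ v * U v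

/-- `F` vanishes near the origin or is a monomial times a unit. -/
def MZ (F : (Fin N → ℝ) → ℝ) : Prop :=
  (∀ᶠ v in 𝓝 (0 : Fin N → ℝ), F v = 0) ∨ ∃ γ, MU γ F

lemma mono_zero (v : Fin N → ℝ) : mono 0 v = 1 := by simp [mono]

lemma mono_add (a b : Fin N → ℕ) (v : Fin N → ℝ) : mono (a + b) v = mono a v * mono b v := by
  simp [mono, pow_add, Finset.prod_mul_distrib]

lemma mono_smul (k : ℕ) (a : Fin N → ℕ) (v : Fin N → ℝ) : mono (k • a) v = mono a v ^ k := by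
  simp [mono, ← Finset.prod_pow, ← pow_mul, mul_comm]

lemma mono_single (i : Fin N) (v : Fin N → ℝ) : mono (Pi.single i 1) v = v i := by
  rw [mono, Finset.prod_eq_single i]
  · simp
  · intro j _ h; simp [h]
  · simp

lemma analyticAt_coord (j : Fin N) (x : Fin N → ℝ) : AnalyticAt ℝ (fun v : Fin N → ℝ => v j) x :=
  (ContinuousLinearMap.proj (R := ℝ) (φ := fun _ : Fin N => ℝ) j).analyticAt x

lemma mono_analytic (a : Fin N → ℕ) (x : Fin N → ℝ) : AnalyticAt ℝ (mono a) x := by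
  unfold mono
  exact Finset.analyticAt_fun_prod _ fun j _ => (analyticAt_coord j x).fun_pow _

lemma mono_at_zero {a : Fin N → ℕ} (h : a ≠ 0) : mono a 0 = 0 := by
  obtain ⟨j, hj⟩ := Function.ne_iff.1 h
  exact Finset.prod_eq_zero (Finset.mem_univ j) (by simpa using hj)

lemma MU.congr {γ : Fin N → ℕ} {F G : (Fin N → ℝ) → ℝ} (h : MU γ F)
    (hFG : ∀ᶠ v in 𝓝 (0 : Fin N → ℝ), G v = F v) : MU γ G := by
  obtain ⟨U, h1, h2, h3⟩ := h
  exact ⟨U, h1, h2, by filter_upwards [h3, hFG] with v a b; rw [b, a]⟩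

lemma MZ.congr {F G : (Fin N → ℝ) → ℝ} (h : MZ F)
    (hFG : ∀ᶠ v in 𝓝 (0 : Fin N → ℝ), G v = F v) : MZ G := by
  rcases h with h | ⟨γ, h⟩
  · left; filter_upwards [h, hFG] with v a b; rw [b, a]
  · exact Or.inr ⟨γ, h.congr hFG⟩

lemma MU.mul {a b : Fin N → ℕ} {F G : (Fin N → ℝ) → ℝ} (hF : MU a F) (hG : MU b G) :
    MU (a + b) (fun v => F v * G v) := by
  obtain ⟨U, h1, h2, h3⟩ := hF
  obtain ⟨V, k1, k2, k3⟩ := hG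
  refine ⟨fun v => U v * V v, h1.mul k1, mul_ne_zero h2 k2, ?_⟩
  filter_upwards [h3, k3] with v p q
  rw [p, q, mono_add]; ring

lemma MZ.mul {F G : (Fin N → ℝ) → ℝ} (hF : MZ F) (hG : MZ G) : MZ (fun v => F v * G v) := by
  rcases hF with hF | ⟨a, hF⟩
  · left; filter_upwards [hF] with v p; simp [p]
  rcases hG with hG | ⟨b, hG⟩
  · left; filter_upwards [hG] with v p; simp [p]
  exact Or.inr ⟨_, hF.mul hG⟩

lemma MZ.unit {U : (Fin N → ℝ) → ℝ} (h : AnalyticAt ℝ U 0) (h0 : U 0 ≠ 0) : MZ U :=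
  Or.inr ⟨0, U, h, h0, by simp [mono_zero]⟩

lemma MZ.pow {F : (Fin N → ℝ) → ℝ} (hF : MZ F) (k : ℕ) : MZ (fun v => F v ^ k) := by
  induction k with
  | zero => simpa using MZ.unit (N := N) analyticAt_const one_ne_zero
  | succ k ih => simpa only [pow_succ] using ih.mul hF

lemma MU.pow {a : Fin N → ℕ} {F : (Fin N → ℝ) → ℝ} (hF : MU a F) (k : ℕ) : MU (k • a) (fun v => F v ^ k) := by
  obtain ⟨U, h1, h2, h3⟩ := hF
  refine ⟨fun v => U v ^ k, h1.pow k, pow_ne_zero k h2, ?_⟩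
  filter_upwards [h3] with v p
  rw [p, mono_smul, mul_pow]

lemma MZ.coord (j : Fin N) : MZ (fun v => v j) :=
  Or.inr ⟨Pi.single j 1, fun _ => 1, analyticAt_const, one_ne_zero, by simp [mono_single]⟩

lemma MZ.zero : MZ (fun _ : Fin N → ℝ => (0:ℝ)) := Or.inl (by simp)

lemma MZ.prod {ι : Type*} (s : Finset ι) {F : ι → (Fin N → ℝ) → ℝ} (h : ∀ i ∈ s, MZ (F i)) :
    MZ (fun v => ∏ i ∈ s, F i v) := by
  classical
  induction s using Finset.induction_on with
  | empty => simpa using MZ.unit (N := N) analyticAt_const one_ne_zero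
  | insert a s ha ih =>
    simp only [Finset.prod_insert ha]
    exact (h a (by simp)).mul (ih fun i hi => h i (by simp [hi]))

lemma MZ.mono {M : ℕ} {φ : (Fin N → ℝ) → (Fin M → ℝ)} (h : ∀ j, MZ (fun v => φ v j)) (a : Fin M → ℕ) :
    MZ (fun v => mono a (φ v)) := by
  exact MZ.prod _ fun j _ => (h j).pow _

lemma MZ.comp {M : ℕ} {F : (Fin M → ℝ) → ℝ} (hF : MZ F) {φ : (Fin N → ℝ) → (Fin M → ℝ)}
    (hφ : AnalyticAt ℝ φ 0) (hφ0 : φ 0 = 0) (h : ∀ j, MZ (fun v => φ v j)) :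
    MZ (fun v => F (φ v)) := by
  have ht : Tendsto φ (𝓝 0) (𝓝 0) := by simpa [hφ0] using hφ.continuousAt.tendsto
  rcases hF with hF | ⟨a, U, h1, h2, h3⟩
  · left; exact ht.eventually hF
  · have hU : MZ (fun v => U (φ v)) := by
      refine MZ.unit ?_ (by rwa [hφ0])
      exact AnalyticAt.fun_comp (by rwa [hφ0]) hφ
    refine ((MZ.mono h a).mul hU).congr (ht.eventually h3)

/-- weight of an exponent -/
def dot (q a : Fin N → ℕ) : ℕ := ∑ j, q j * a j

lemma mono_curve (q a : Fin N → ℕ) (t : ℝ) : mono a (fun j => t ^ q j) = t ^ dot q a := by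
  simp [mono, dot, ← pow_mul, Finset.prod_pow_eq_pow_sum]

lemma dot_add (q r a : Fin N → ℕ) : dot (q + r) a = dot q a + dot r a := by
  simp [dot, add_mul, Finset.sum_add_distrib]

lemma dot_single (i : Fin N) (k : ℕ) (a : Fin N → ℕ) : dot (Pi.single i k) a = k * a i := by
  rw [dot, Finset.sum_eq_single i]
  · simp
  · intro j _ h; simp [h]
  · simp

lemma curve_tendsto {q : Fin N → ℕ} (hq : ∀ j, 0 < q j) :
    Tendsto (fun t : ℝ => (fun j => t ^ q j : Fin N → ℝ)) (𝓝 0) (𝓝 0) := by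
  have : Continuous (fun t : ℝ => (fun j => t ^ q j : Fin N → ℝ)) := by fun_prop
  have h := this.tendsto 0
  have h0 : (fun j => (0:ℝ) ^ q j : Fin N → ℝ) = 0 := by
    ext j; simp [(hq j).ne']
  rwa [h0] at h

lemma one_dim {u f g : ℝ → ℝ} (hu : ContinuousAt u 0) (hf : ContinuousAt f 0) (hg : ContinuousAt g 0)
    {p q r : ℕ} (hp : r < p) (hq : r < q) (h : ∀ᶠ t in 𝓝 (0:ℝ), t ^ r * u t = t ^ p * f t + t ^ q * g t) :
    u 0 = 0 := by
  have h1 : Tendsto u (𝓝[≠] 0) (𝓝 (u 0)) := hu.tendsto.mono_left nhdsWithin_le_nhds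
  have h2 : Tendsto (fun t => t ^ (p - r) * f t + t ^ (q - r) * g t) (𝓝[≠] 0) (𝓝 0) := by
    have : ContinuousAt (fun t => t ^ (p - r) * f t + t ^ (q - r) * g t) 0 := by fun_prop
    have h3 := this.tendsto.mono_left (nhdsWithin_le_nhds (s := {0}ᶜ))
    have e1 : p - r ≠ 0 := by omega
    have e2 : q - r ≠ 0 := by omega
    simpa [e1, e2] using h3
  refine tendsto_nhds_unique h1 (h2.congr' ?_)
  filter_upwards [nhdsWithin_le_nhds h, self_mem_nhdsWithin] with t h1 h2
  have h2' : t ≠ 0 := h2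
  obtain ⟨p', rfl⟩ := Nat.exists_eq_add_of_lt hp
  obtain ⟨q', rfl⟩ := Nat.exists_eq_add_of_lt hq
  have e1 : r + p' + 1 - r = p' + 1 := by omega
  have e2 : r + q' + 1 - r = q' + 1 := by omega
  rw [e1, e2]
  apply mul_left_cancel₀ (pow_ne_zero r h2')
  rw [h1]; ring

lemma exists_weight {a b : Fin N → ℕ} {i : Fin N} (h : a i < b i) (q : Fin N → ℕ) {K : ℕ} (hK : dot q a < K) :
    dot (q + Pi.single i K) a < dot (q + Pi.single i K) b := by
  rw [dot_add, dot_add, dot_single, dot_single]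
  have : K * (a i + 1) ≤ K * b i := Nat.mul_le_mul_left _ h
  nlinarith

lemma weight_zero {a b : Fin N → ℕ} {F G : (Fin N → ℝ) → ℝ} (hF : MU a F) (hG : MU b G)
    (hz : ∀ᶠ v in 𝓝 (0 : Fin N → ℝ), F v - G v = 0) {q : Fin N → ℕ} (hq : ∀ j, 0 < q j) :
    ¬ dot q a < dot q b := by
  intro hlt
  obtain ⟨U, h1, h2, h3⟩ := hF
  obtain ⟨V, k1, k2, k3⟩ := hG
  have ht := curve_tendsto hq
  have h0 : (fun j => (0:ℝ) ^ q j : Fin N → ℝ) = 0 := by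
    ext j; simp [(hq j).ne']
  have cU : ContinuousAt (fun t : ℝ => U (fun j => t ^ q j)) 0 := by
    refine ContinuousAt.comp' (by rw [h0]; exact h1.continuousAt) (by fun_prop)
  have cV : ContinuousAt (fun t : ℝ => V (fun j => t ^ q j)) 0 := by
    refine ContinuousAt.comp' (by rw [h0]; exact k1.continuousAt) (by fun_prop)
  have := one_dim (r := dot q a) (p := dot q b) (q := dot q b) (g := fun _ => 0) cU cV continuousAt_const hlt hlt (by
    filter_upwards [ht.eventually h3, ht.eventually k3, ht.eventually hz] with t e1 e2 e3
    rw [mono_curve] at e1 e2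
    linarith)
  simp only [h0] at this
  exact h2 this

lemma weight_eq {a b c : Fin N → ℕ} {F G : (Fin N → ℝ) → ℝ} (hF : MU a F) (hG : MU b G)
    (hz : MU c (fun v => F v - G v)) {q : Fin N → ℕ} (hq : ∀ j, 0 < q j) (hlt : dot q a < dot q b) :
    dot q c = dot q a := by
  obtain ⟨U, h1, h2, h3⟩ := hF
  obtain ⟨V, k1, k2, k3⟩ := hG
  obtain ⟨W, l1, l2, l3⟩ := hz
  have ht := curve_tendsto hq
  have h0 : (fun j => (0:ℝ) ^ q j : Fin N → ℝ) = 0 := by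
    ext j; simp [(hq j).ne']
  have cU : ContinuousAt (fun t : ℝ => U (fun j => t ^ q j)) 0 := by
    refine ContinuousAt.comp' (by rw [h0]; exact h1.continuousAt) (by fun_prop)
  have cV : ContinuousAt (fun t : ℝ => V (fun j => t ^ q j)) 0 := by
    refine ContinuousAt.comp' (by rw [h0]; exact k1.continuousAt) (by fun_prop)
  have cW : ContinuousAt (fun t : ℝ => W (fun j => t ^ q j)) 0 := by
    refine ContinuousAt.comp' (by rw [h0]; exact l1.continuousAt) (by fun_prop)
  have key : ∀ᶠ t in 𝓝 (0:ℝ), t ^ dot q a * U (fun j => t ^ q j) - t ^ dot q b * V (fun j => t ^ q j)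
      = t ^ dot q c * W (fun j => t ^ q j) := by
    filter_upwards [ht.eventually h3, ht.eventually k3, ht.eventually l3] with t e1 e2 e3
    rw [mono_curve] at e1 e2 e3
    rw [e1, e2] at e3
    exact e3
  rcases lt_trichotomy (dot q c) (dot q a) with h | h | h
  · exfalso
    have := one_dim (r := dot q c) (p := dot q a) (q := dot q b) cW cU cV.neg h (h.trans hlt) (by
      filter_upwards [key] with t e
      simp only [Pi.neg_apply]
      linarith)
    simp only [h0] at this
    exact l2 this
  · exact h
  · exfalso
    have := one_dim (r := dot q a) (p := dot q b) (q := dot q c) cU cV cW hlt h (by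
      filter_upwards [key] with t e
      linarith)
    simp only [h0] at this
    exact h2 this

lemma comparable {a b : Fin N → ℕ} {F G : (Fin N → ℝ) → ℝ} (hF : MU a F) (hG : MU b G)
    (hz : MZ (fun v => F v - G v)) : a ≤ b ∨ b ≤ a := by
  by_contra hcon
  push Not at hcon
  obtain ⟨hab, hba⟩ := hcon
  rw [Pi.le_def] at hab hba
  push Not at hab hba
  obtain ⟨j, hj⟩ := hab
  obtain ⟨i, hi⟩ := hba
  rcases hz with hz | ⟨c, hc⟩
  · refine weight_zero hF hG hz (q := 1 + Pi.single i (dot 1 a + 1)) ?_ (exists_weight hi 1 (Nat.lt_succ_self _))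
    intro j; simp
  · have hc' : MU c (fun v => G v - F v) := by
      obtain ⟨W, l1, l2, l3⟩ := hc
      refine ⟨fun v => - W v, l1.neg, by simpa using l2, ?_⟩
      filter_upwards [l3] with v e
      linarith
    have main : ∀ {a b : Fin N → ℕ} {F G : (Fin N → ℝ) → ℝ} (hF : MU a F) (hG : MU b G)
        (hc : MU c (fun v => F v - G v)) {i : Fin N} (hi : a i < b i) (q : Fin N → ℕ) (hq : ∀ j, 0 < q j),
        dot q c = dot q a := by
      intro a b F G hF hG hc i hi q hq
      have e1 := weight_eq hF hG hc (q := q + Pi.single i (dot q a + 1)) (fun j => by simp [hq j])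
        (exists_weight hi q (Nat.lt_succ_self _))
      have e2 := weight_eq hF hG hc (q := q + Pi.single i (dot q a + 2)) (fun j => by simp [hq j])
        (exists_weight hi q (by omega))
      rw [dot_add, dot_add, dot_single, dot_single] at e1 e2
      have e3 : c i = a i := by nlinarith
      rw [e3] at e1
      omega
    have m : ∀ q : Fin N → ℕ, (∀ j, 0 < q j) → dot q a = dot q b := fun q hq =>
      (main hF hG hc hi q hq).symm.trans (main hG hF hc' hj q hq)
    have m1 := m 1 (by simp)
    have m2 := m (1 + Pi.single i 1) (by intro j; simp)
    rw [dot_add, dot_add, dot_single, dot_single] at m2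
    omega

lemma euler {F : (Fin N → ℝ) → ℝ} (hF : MZ F) : ∃ (κ : (Fin N → ℝ) → ℝ) (r : ℝ),
    Tendsto κ (𝓝 0) (𝓝 r) ∧ (∀ᶠ v in 𝓝 (0 : Fin N → ℝ), fderiv ℝ F v v = κ v * F v) ∧
    (F 0 = 0 → (∀ᶠ v in 𝓝 (0 : Fin N → ℝ), F v = 0) ∨ 0 < r) := by
  rcases hF with hF | ⟨a, U, h1, h2, h3⟩
  · refine ⟨0, 0, tendsto_const_nhds, ?_, fun _ => Or.inl hF⟩
    filter_upwards [eventually_eventually_nhds.2 hF] with v hv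
    have : F =ᶠ[𝓝 v] fun _ => (0:ℝ) := hv
    rw [this.fderiv_eq]
    simp
  · refine ⟨fun v => dot 1 a + fderiv ℝ U v v / U v, dot 1 a, ?_, ?_, ?_⟩
    · have c1 : ContinuousAt (fun v => fderiv ℝ U v v) 0 :=
        (h1.fderiv.continuousAt).clm_apply continuousAt_id
      have c2 : ContinuousAt (fun v => (dot 1 a : ℝ) + fderiv ℝ U v v / U v) 0 :=
        continuousAt_const.add (c1.div h1.continuousAt h2)
      simpa [ContinuousAt] using c2
    · filter_upwards [eventually_eventually_nhds.2 h3, eventually_diff h1,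
        h1.continuousAt.eventually_ne h2] with v e1 e2 e3
      have hFd : DifferentiableAt ℝ F v := by
        refine DifferentiableAt.congr_of_eventuallyEq ?_ e1
        exact (mono_analytic a v).differentiableAt.mul e2
      have hs : HasDerivAt (fun t : ℝ => t • v) v 1 := by
        simpa using (hasDerivAt_id (1:ℝ)).smul_const v
      have d1 : HasDerivAt (fun t : ℝ => F (t • v)) (fderiv ℝ F v v) 1 :=
        HasFDerivAt.comp_hasDerivAt (l := F) (f := fun t : ℝ => t • v) 1 (by simpa using hFd.hasFDerivAt) hs
      have d2 : HasDerivAt (fun t : ℝ => U (t • v)) (fderiv ℝ U v v) 1 :=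
        HasFDerivAt.comp_hasDerivAt (l := U) (f := fun t : ℝ => t • v) 1 (by simpa using e2.hasFDerivAt) hs
      have d3 := (((hasDerivAt_pow (dot 1 a) (1:ℝ)).mul_const (mono a v)).mul d2)
      have ht : Tendsto (fun t : ℝ => t • v) (𝓝 1) (𝓝 v) := by
        simpa using hs.continuousAt.tendsto
      have hm : ∀ t : ℝ, mono a (t • v) = t ^ dot 1 a * mono a v := by
        intro t
        simp [mono, dot, mul_pow, Finset.prod_mul_distrib, Finset.prod_pow_eq_pow_sum]
      have d4 := d1.unique (d3.congr_of_eventuallyEq (by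
        filter_upwards [ht.eventually e1] with t h
        rw [h, hm]; rfl))
      have e4 := e1.self_of_nhds
      rw [d4, e4]
      simp
      field_simp
    · intro h0
      right
      have := h3.self_of_nhds
      rw [h0] at this
      have h4 : mono a 0 = 0 := by
        rcases mul_eq_zero.1 this.symm with h | h
        · exact h
        · exact absurd h h2
      by_contra h5
      have h6 : dot 1 a = 0 := by
        have : ¬ 0 < dot 1 a := by exact_mod_cast h5
        omega
      have h7 : a = 0 := by
        ext j
        simp [dot] at h6
        exact h6 j
      rw [h7, mono_zero] at h4
      exact one_ne_zero h4

end monomials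
end BL

namespace BL

section res
variable {Ω : Type} {l : Ultrafilter Ω}

/-- There is an analytic chart `φ` with property `Q` through which the net `p` factors. -/
def Res {T : Type} [NormedAddCommGroup T] [NormedSpace ℝ T] (l : Ultrafilter Ω) (N : ℕ) (p : Ω → T)
    (Q : ((Fin N → ℝ) → T) → Prop) : Prop :=
  ∃ (w : Ω → Fin N → ℝ) (φ : (Fin N → ℝ) → T), Tendsto w l (𝓝 0) ∧ AnalyticAt ℝ φ 0 ∧ φ 0 = 0 ∧
    (∀ᶠ ω in l, p ω = φ (w ω)) ∧ Q φ

lemma Res.trans {T T' : Type} [NormedAddCommGroup T] [NormedSpace ℝ T]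
    [NormedAddCommGroup T'] [NormedSpace ℝ T'] {N : ℕ} {p : Ω → T} {p' : Ω → T'}
    {Q : ((Fin N → ℝ) → T) → Prop} {Q' : ((Fin N → ℝ) → T') → Prop} (h : Res l N p' Q')
    (χ : T' → T) (hχ : AnalyticAt ℝ χ 0) (hχ0 : χ 0 = 0) (hp : ∀ᶠ ω in l, p ω = χ (p' ω))
    (hQ : ∀ φ, AnalyticAt ℝ φ 0 → φ 0 = 0 → Q' φ → Q (fun v => χ (φ v))) : Res l N p Q := by
  obtain ⟨w, φ, h1, h2, h3, h4, h5⟩ := h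
  refine ⟨w, fun v => χ (φ v), h1, ?_, by simp [h3, hχ0], ?_, hQ φ h2 h3 h5⟩
  · exact AnalyticAt.fun_comp (g := χ) (by rwa [h3]) h2
  · filter_upwards [h4, hp] with ω a b
    rw [b, a]

lemma Res.imp {T : Type} [NormedAddCommGroup T] [NormedSpace ℝ T]
    {N : ℕ} {p : Ω → T}
    {Q Q' : ((Fin N → ℝ) → T) → Prop} (h : Res l N p Q')
    (hQ : ∀ φ, AnalyticAt ℝ φ 0 → φ 0 = 0 → Q' φ → Q φ) : Res l N p Q :=
  h.trans id analyticAt_id rfl (by simp) hQ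

lemma ratio (a b : Ω → ℝ) (hb : ∀ᶠ ω in l, b ω ≠ 0) :
    (∃ c, Tendsto (fun ω => a ω / b ω) l (𝓝 c)) ∨
    ((∀ᶠ ω in l, a ω ≠ 0) ∧ Tendsto (fun ω => b ω / a ω) l (𝓝 0)) := by
  by_cases h : ∃ M : ℝ, ∀ᶠ ω in l, |a ω / b ω| ≤ M
  · left
    obtain ⟨M, hM⟩ := h
    have hk : IsCompact (Set.Icc (-M) M) := isCompact_Icc
    obtain ⟨c, -, hc⟩ := hk.ultrafilter_le_nhds (l.map fun ω => a ω / b ω) (by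
      rw [le_principal_iff]
      show ∀ᶠ ω in l, a ω / b ω ∈ Set.Icc (-M) M
      filter_upwards [hM] with ω h
      exact abs_le.1 h)
    exact ⟨c, hc⟩
  · right
    push Not at h
    have h2 : ∀ M : ℝ, ∀ᶠ ω in l, M < |a ω / b ω| := h
    have h3 : Tendsto (fun ω => |a ω / b ω|) l atTop := tendsto_atTop.2 fun M => (h2 M).mono fun _ h => h.le
    constructor
    · filter_upwards [h2 0] with ω h e
      simp [e] at h
    · rw [tendsto_zero_iff_abs_tendsto_zero]
      refine h3.inv_tendsto_atTop.congr fun ω => ?_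
      rw [Pi.inv_apply, ← abs_inv, inv_div]; rfl

/-- splitting off the coordinate zero -/
def spl {n : ℕ} (v : Fin (n+1) → ℝ) : (Fin n → ℝ) × ℝ := (Fin.tail v, v 0)

lemma analyticAt_tail {n : ℕ} (x : Fin (n+1) → ℝ) : AnalyticAt ℝ (fun v : Fin (n+1) → ℝ => Fin.tail v) x := by
  refine AnalyticAt.pi fun j => ?_
  exact analyticAt_coord j.succ x

lemma analyticAt_spl {n : ℕ} (x : Fin (n+1) → ℝ) : AnalyticAt ℝ (spl (n := n)) x :=
  (analyticAt_tail x).prod (analyticAt_coord 0 x)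

lemma tendsto_cons {n : ℕ} {y : Ω → ℝ} {s : Ω → Fin n → ℝ} (hy : Tendsto y l (𝓝 0)) (hs : Tendsto s l (𝓝 0)) :
    Tendsto (fun ω => (Fin.cons (y ω) (s ω) : Fin (n+1) → ℝ)) l (𝓝 0) := by
  rw [tendsto_pi_nhds] at hs ⊢
  intro j
  refine Fin.cases ?_ (fun j => ?_) j
  · simpa using hy
  · simpa using hs j

lemma analyticAt_update {E : Type*} [NormedAddCommGroup E] [NormedSpace ℝ E] {n : ℕ} {f : E → Fin n → ℝ} {g : E → ℝ} {x : E}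
    (hf : AnalyticAt ℝ f x) (hg : AnalyticAt ℝ g x) (i : Fin n) :
    AnalyticAt ℝ (fun v => Function.update (f v) i (g v)) x := by
  refine AnalyticAt.pi fun j => ?_
  by_cases h : j = i
  · subst h; simpa using hg
  · simp only [Function.update_of_ne h]
    exact AnalyticAt.fun_comp (analyticAt_coord j _) hf

lemma caseB {n : ℕ} : ∀ (m : ℕ) (α : Fin n → ℕ) (s : Ω → Fin n → ℝ) (y τ : Ω → ℝ), ∑ j, α j = m →
    Tendsto s l (𝓝 0) → Tendsto y l (𝓝 0) → Tendsto τ l (𝓝 0) → (∀ᶠ ω in l, y ω ≠ 0) →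
    (∀ᶠ ω in l, mono α (s ω) = τ ω * y ω) →
    Res l (n+1) (fun ω => (s ω, y ω)) (fun φ => (∀ j, MZ (fun v => (φ v).1 j)) ∧ MZ (fun v => (φ v).2) ∧
      ∃ t : (Fin (n+1) → ℝ) → ℝ, AnalyticAt ℝ t 0 ∧ t 0 = 0 ∧
        ∀ᶠ v in 𝓝 0, mono α (φ v).1 = t v * (φ v).2) := by
  intro m
  induction m with
  | zero =>
    intro α s y τ hα hs hy hτ hy0 hm
    exfalso
    have h0 : α = 0 := by ext j; simpa using (Finset.sum_eq_zero_iff.1 hα) j (Finset.mem_univ j)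
    subst h0
    simp only [mono_zero] at hm
    have := hτ.mul hy
    have h1 : Tendsto (fun _ : Ω => (1:ℝ)) l (𝓝 (0*0)) := this.congr' (by filter_upwards [hm] with ω h using h.symm)
    have := tendsto_nhds_unique h1 tendsto_const_nhds
    norm_num at this
  | succ m ih =>
    intro α s y τ hα hs hy hτ hy0 hm
    obtain ⟨i, hi⟩ : ∃ i, 0 < α i := by
      by_contra! h
      have : ∑ j, α j = 0 := Finset.sum_eq_zero fun j _ => Nat.le_zero.1 (h j)
      omega
    obtain ⟨β, rfl⟩ : ∃ β : Fin n → ℕ, α = β + Pi.single i 1 := by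
      refine ⟨α - Pi.single i 1, ?_⟩
      funext j
      by_cases h : j = i
      · subst h; simp only [Pi.add_apply, Pi.sub_apply, Pi.single_eq_same]; omega
      · simp only [Pi.add_apply, Pi.sub_apply, Pi.single_eq_of_ne h]; omega
    have hβ : ∑ j, β j = m := by
      simp [Finset.sum_add_distrib] at hα
      omega
    simp only [mono_add, mono_single] at hm ⊢
    have hsi := (tendsto_pi_nhds.1 hs) 
    rcases ratio (fun ω => s ω i) y hy0 with ⟨c, hc⟩ | ⟨hsi0, hc⟩
    · set w : Ω → Fin (n+1) → ℝ := fun ω => Fin.cons (y ω) (Function.update (s ω) i (s ω i / y ω - c)) with hw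
      have hwt : Tendsto w l (𝓝 0) := by
        apply tendsto_cons hy
        rw [tendsto_pi_nhds]
        intro j
        by_cases h : j = i
        · subst h
          simpa using hc.sub_const c
        · simpa [Function.update_of_ne h] using hsi j
      set φ : (Fin (n+1) → ℝ) → (Fin n → ℝ) × ℝ := fun v => (Function.update (Fin.tail v) i (v 0 * (c + v i.succ)), v 0) with hφ
      have hφa : AnalyticAt ℝ φ 0 := by
        refine AnalyticAt.prod (analyticAt_update (analyticAt_tail 0) ?_ i) (analyticAt_coord 0 0)
        exact (analyticAt_coord 0 0).mul (analyticAt_const.add (analyticAt_coord _ 0))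
      have hφ0 : φ 0 = 0 := by
        simp only [hφ]
        ext j
        · by_cases h : j = i
          · subst h; simp
          · simp [Function.update_of_ne h, Fin.tail]
        · simp
      have hp : ∀ᶠ ω in l, (s ω, y ω) = φ (w ω) := by
        filter_upwards [hy0] with ω h
        simp only [hφ, hw]
        ext j
        · by_cases h' : j = i
          · subst h'
            simp
            field_simp
          · simp [Function.update_of_ne h']
        · simp
      have hta : AnalyticAt ℝ (fun v : Fin (n+1) → ℝ => mono β (φ v).1 * (c + v i.succ)) 0 := by
        refine AnalyticAt.mul ?_ (analyticAt_const.add (analyticAt_coord _ 0))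
        exact AnalyticAt.fun_comp (g := mono β) (mono_analytic _ _) (AnalyticAt.fun_comp analyticAt_fst hφa)
      refine ⟨w, φ, hwt, hφa, hφ0, hp, ?_, MZ.coord 0, fun v => mono β (φ v).1 * (c + v i.succ), hta, ?_, ?_⟩
      · intro j
        by_cases h : j = i
        · subst h
          simp only [hφ, Function.update_self]
          refine MZ.mul (MZ.coord 0) ?_
          by_cases hc0 : c = 0
          · subst hc0; simpa using MZ.coord j.succ
          · refine MZ.unit (analyticAt_const.add (analyticAt_coord _ 0)) (by simpa using hc0)
        · simp only [hφ, Function.update_of_ne h]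
          exact MZ.coord j.succ
      · have h1 := (hta.continuousAt.tendsto).comp hwt
        refine tendsto_nhds_unique h1 (hτ.congr' ?_)
        filter_upwards [hp, hy0, hm] with ω a b h
        simp only [Function.comp]
        rw [← a]
        simp only [hw, Fin.cons_succ, Function.update_self]
        rw [eq_comm, eq_div_of_mul_eq b h.symm]
        field_simp
        ring
      · refine Eventually.of_forall fun v => ?_
        simp only [hφ, Function.update_self]
        ring
    · have h2 := ih β s (fun ω => y ω / s ω i) τ hβ hs hc hτ (by
        filter_upwards [hy0, hsi0] with ω a b using div_ne_zero a b) (by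
        filter_upwards [hsi0, hm] with ω a b
        field_simp
        exact b)
      refine h2.trans (fun z => (z.1, z.1 i * z.2)) ?_ (by simp) ?_ ?_
      · refine AnalyticAt.prod analyticAt_fst (AnalyticAt.mul ?_ analyticAt_snd)
        exact AnalyticAt.fun_comp (analyticAt_coord i _) analyticAt_fst
      · filter_upwards [hsi0] with ω h
        rw [mul_div_cancel₀ _ h]
      · rintro φ h1 h0 ⟨h3, h4, t, h5, h6, h7⟩
        refine ⟨h3, (h3 i).mul h4, t, h5, h6, ?_⟩
        filter_upwards [h7] with v h
        rw [h]; ring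

end res
end BL

namespace BL
open Polynomial in
lemma poly_reg (d : ℕ) (z : ℕ → ℝ) (h c : ℝ) (hh : h ≠ 0) : ∃ t ≤ d, ∃ R : ℝ[X], R.eval 0 ≠ 0 ∧
    (∀ y, ∑ i ∈ Finset.range d, z i * (c + y) ^ i + h * (c + y) ^ d = y ^ t * R.eval y) ∧
    (t = d → ∀ i < d, z i = h * ((-c) ^ (d - i) * (d.choose i))) := by
  set Q : ℝ[X] := ∑ i ∈ Finset.range d, C (z i) * X ^ i + C h * X ^ d with hQ
  have hcoef : ∀ j < d, Q.coeff j = z j := by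
    intro j hj
    simp only [hQ, coeff_add, finsetSum_coeff, coeff_C_mul, coeff_X_pow]
    rw [Finset.sum_eq_single j]
    · simp [hj.ne]
    · intro b _ hb; simp [hb.symm]
    · intro hb; simp [hj] at hb
  have hcoefd : Q.coeff d = h := by
    simp only [hQ, coeff_add, finsetSum_coeff, coeff_C_mul, coeff_X_pow]
    rw [Finset.sum_eq_zero]
    · simp
    · intro b hb
      have := Finset.mem_range.1 hb
      simp [this.ne']
  have hdeg : Q.natDegree = d := by
    apply natDegree_eq_of_le_of_coeff_ne_zero _ (by rwa [hcoefd])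
    refine (natDegree_add_le _ _).trans (max_le ?_ (natDegree_C_mul_X_pow_le _ _))
    refine natDegree_sum_le_of_forall_le _ _ fun i hi => ?_
    exact (natDegree_C_mul_X_pow_le _ _).trans (Finset.mem_range.1 hi).le
  set P := Q.comp (X + C c) with hP
  have hPd : P.natDegree = d := by rw [hP, natDegree_comp, hdeg]; simp
  have hPl : P.coeff d = h := by
    have h1 := leadingCoeff_comp (p := Q) (q := X + C c) (by simp)
    rw [leadingCoeff, leadingCoeff, ← hP, hPd, hdeg, hcoefd] at h1
    simpa using h1
  have hP0 : P ≠ 0 := by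
    intro e; rw [e] at hPl; simp at hPl; exact hh hPl.symm
  obtain ⟨R, hR, hR0⟩ := P.exists_eq_pow_rootMultiplicity_mul_and_not_dvd hP0 0
  set t := P.rootMultiplicity 0
  simp only [map_zero, sub_zero] at hR hR0
  have hRne : R ≠ 0 := by rintro rfl; simp at hR0
  have hd : t + R.natDegree = d := by
    rw [← hPd, hR, natDegree_mul (pow_ne_zero _ X_ne_zero) hRne]; simp
  refine ⟨t, by omega, R, ?_, ?_, ?_⟩
  · rw [X_dvd_iff, coeff_zero_eq_eval_zero] at hR0; exact hR0
  · intro y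
    have : P.eval y = y ^ t * R.eval y := by rw [hR]; simp
    rw [← this, hP, hQ]
    simp [eval_finsetSum, add_comm]
  · intro ht i hi
    have h0 : R.natDegree = 0 := by omega
    obtain ⟨r, rfl⟩ : ∃ r, R = C r := ⟨_, eq_C_of_natDegree_eq_zero h0⟩
    rw [ht] at hR
    have hr : r = h := by rw [← hPl, hR]; simp
    have hQ2 : Q = C h * (X + C (-c)) ^ d := by
      have : P.comp (X + C (-c)) = Q := by
        rw [hP, comp_assoc]; simp
      rw [← this, hR, hr]; simp only [mul_comp, pow_comp, X_comp, C_comp]; ring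
    rw [← hcoef i hi, hQ2, coeff_C_mul, coeff_X_add_C_pow]

section prep
variable {Ω : Type} {l : Ultrafilter Ω} {n : ℕ} {ι : Type} [Fintype ι]

/-- The inductive statement: regular functions of orders `d k` can be resolved. -/
def WProp (l : Ultrafilter Ω) (n : ℕ) (d : ι → ℕ) : Prop :=
  ∀ (F : ι → (Fin n → ℝ) × ℝ → ℝ), (∀ k, AnalyticAt ℝ (F k) 0) → (∀ k, Reg (F k) (d k)) →
  ∀ (κ : Type) [Finite κ] (G : κ → (Fin n → ℝ) → ℝ), (∀ j, AnalyticAt ℝ (G j) 0) →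
  ∀ (x : Ω → Fin n → ℝ) (y : Ω → ℝ), Tendsto x l (𝓝 0) → Tendsto y l (𝓝 0) →
  Res l (n+1) (fun ω => (x ω, y ω)) (fun φ => (∀ k, MZ (fun v => F k (φ v))) ∧ ∀ j, MZ (fun v => G j (φ v).1))

lemma prepA {d : ι → ℕ} (hIH : ∀ d' : ι → ℕ, ∑ k, d' k < ∑ k, d k → WProp l n d')
    {α : Fin n → ℕ} (hα : α ≠ 0) {z : ι → ℕ → (Fin n → ℝ) → ℝ} (hz : ∀ k i, AnalyticAt ℝ (z k i) 0)
    {h F : ι → (Fin n → ℝ) × ℝ → ℝ} (hh : ∀ k, AnalyticAt ℝ (h k) 0) (hh0 : ∀ k, h k 0 ≠ 0)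
    (hF : ∀ k, ∀ᶠ v in 𝓝 0, F k v = ∑ i ∈ Finset.range (d k), mono α v.1 ^ (d k - i) * z k i v.1 * v.2 ^ i
      + h k v * v.2 ^ d k)
    {k0 : ι} {e : ℕ} (hk0 : d k0 = e + 1) (hz0 : z k0 e 0 = 0)
    {k1 : ι} {i1 : ℕ} (hi1 : i1 < d k1) (hz1 : z k1 i1 0 ≠ 0)
    {s : Ω → Fin n → ℝ} {y : Ω → ℝ} (hs : Tendsto s l (𝓝 0)) (c : ℝ)
    (hθ : ∀ᶠ ω in l, mono α (s ω) ≠ 0) (hc : Tendsto (fun ω => y ω / mono α (s ω)) l (𝓝 c)) :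
    Res l (n+1) (fun ω => (s ω, y ω)) (fun φ => (∀ k, MZ (fun v => F k (φ v))) ∧ ∀ j, MZ (fun v => (φ v).1 j)) := by
  set χ : (Fin n → ℝ) × ℝ → (Fin n → ℝ) × ℝ := fun v => (v.1, mono α v.1 * (c + v.2)) with hχ
  have hmfst : AnalyticAt ℝ (fun v : (Fin n → ℝ) × ℝ => mono α v.1) 0 := analyticAt_comp_fst (mono_analytic α 0)
  have hcy : AnalyticAt ℝ (fun v : (Fin n → ℝ) × ℝ => c + v.2) 0 := analyticAt_const.add analyticAt_snd
  have hχa : AnalyticAt ℝ χ 0 := AnalyticAt.prod analyticAt_fst (hmfst.mul hcy)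
  have hχ0 : χ 0 = 0 := by simp [hχ, mono_at_zero hα]
  have hχt : Tendsto χ (𝓝 0) (𝓝 0) := by simpa [hχ0] using hχa.continuousAt.tendsto
  set F' : ι → (Fin n → ℝ) × ℝ → ℝ := fun k v =>
    ∑ i ∈ Finset.range (d k), z k i v.1 * (c + v.2) ^ i + h k (χ v) * (c + v.2) ^ d k with hF'
  have hFF' : ∀ k, ∀ᶠ v in 𝓝 0, F k (χ v) = mono α v.1 ^ d k * F' k v := by
    intro k
    filter_upwards [hχt.eventually (hF k)] with v hv
    rw [hv, hF']
    simp only [mul_add, Finset.mul_sum]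
    congr 1
    · refine Finset.sum_congr rfl fun i hi => ?_
      have hi := Finset.mem_range.1 hi
      simp only [hχ]
      have : mono α v.1 ^ d k = mono α v.1 ^ (d k - i) * mono α v.1 ^ i := by
        rw [← pow_add]; congr 1; omega
      rw [this, mul_pow]; ring
    · simp only [hχ]; rw [mul_pow]; ring
  have hF'a : ∀ k, AnalyticAt ℝ (F' k) 0 := by
    intro k
    refine AnalyticAt.add (Finset.analyticAt_fun_sum _ fun i _ => ?_) ?_
    · exact (analyticAt_comp_fst (hz k i)).mul (hcy.fun_pow i)
    · exact (AnalyticAt.fun_comp (g := h k) (by rw [hχ0]; exact hh k) hχa).mul (hcy.fun_pow _)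
  choose t ht R hR0 hR hRt using fun k => poly_reg (d k) (fun i => z k i 0) (h k 0) c (hh0 k)
  have hreg : ∀ k, Reg (F' k) (t k) := by
    intro k
    refine ⟨fun y => (R k).eval y, ?_, hR0 k, ?_⟩
    · exact AnalyticAt.aeval_polynomial (z := (0:ℝ)) (f := fun y => y) analyticAt_id (R k)
    · refine Eventually.of_forall fun y => ?_
      rw [← hR k y]
      simp only [hF']
      have : χ (0, y) = 0 := by simp [hχ, mono_at_zero hα]
      rw [this]
  have hlt : ∑ k, t k < ∑ k, d k := by
    by_contra! hle
    have hall : ∀ k, t k = d k := by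
      have := (Finset.sum_eq_sum_iff_of_le (s := Finset.univ) (f := t) (g := d) fun k _ => ht k).1
        (le_antisymm (Finset.sum_le_sum fun k _ => ht k) hle)
      exact fun k => this k (Finset.mem_univ k)
    have h1 := hRt k0 (hall k0) e (by omega)
    rw [hz0, hk0] at h1
    have hc0 : c = 0 := by
      simp [hh0 k0] at h1
      rcases h1 with h1 | h1
      · exact h1
      · exfalso; exact absurd h1 (by positivity)
    have h2 := hRt k1 (hall k1) i1 hi1
    apply hz1
    rw [h2, hc0]
    have : d k1 - i1 ≠ 0 := by omega
    simp [this]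
  have hy' : Tendsto (fun ω => y ω / mono α (s ω) - c) l (𝓝 0) := by simpa using hc.sub_const c
  have key := hIH t hlt F' hF'a hreg (Fin n) (fun j v => v j) (fun j => analyticAt_coord j 0) s _ hs hy'
  refine key.trans χ hχa hχ0 ?_ ?_
  · filter_upwards [hθ] with ω hω
    simp only [hχ]
    congr 1
    field_simp
    ring
  · rintro φ h1 h0 ⟨h2, h3⟩
    have hφt : Tendsto φ (𝓝 0) (𝓝 0) := by simpa [h0] using h1.continuousAt.tendsto
    refine ⟨fun k => ?_, h3⟩
    refine MZ.congr (((MZ.mono h3 α).pow (d k)).mul (h2 k)) (hφt.eventually (hFF' k))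

lemma prep {d : ι → ℕ} (hIH : ∀ d' : ι → ℕ, ∑ k, d' k < ∑ k, d k → WProp l n d')
    {α : Fin n → ℕ} (hα : α ≠ 0) {z : ι → ℕ → (Fin n → ℝ) → ℝ} (hz : ∀ k i, AnalyticAt ℝ (z k i) 0)
    {h F : ι → (Fin n → ℝ) × ℝ → ℝ} (hh : ∀ k, AnalyticAt ℝ (h k) 0) (hh0 : ∀ k, h k 0 ≠ 0)
    (hF : ∀ k, ∀ᶠ v in 𝓝 0, F k v = ∑ i ∈ Finset.range (d k), mono α v.1 ^ (d k - i) * z k i v.1 * v.2 ^ i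
      + h k v * v.2 ^ d k)
    {k0 : ι} {e : ℕ} (hk0 : d k0 = e + 1) (hz0 : z k0 e 0 = 0)
    {k1 : ι} {i1 : ℕ} (hi1 : i1 < d k1) (hz1 : z k1 i1 0 ≠ 0)
    {s : Ω → Fin n → ℝ} {y : Ω → ℝ} (hs : Tendsto s l (𝓝 0)) (hy : Tendsto y l (𝓝 0)) (hy0 : ∀ᶠ ω in l, y ω ≠ 0) :
    Res l (n+1) (fun ω => (s ω, y ω)) (fun φ => (∀ k, MZ (fun v => F k (φ v))) ∧ ∀ j, MZ (fun v => (φ v).1 j)) := by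
  rcases ratio (fun ω => mono α (s ω)) y hy0 with ⟨c, hc⟩ | ⟨h1, h2⟩
  · by_cases hc0 : c = 0
    · subst hc0
      refine (caseB _ α s y _ rfl hs hy hc hy0 ?_).imp ?_
      · filter_upwards [hy0] with ω h; field_simp
      · rintro φ h1 h0 ⟨h2, h3, t, h4, h5, h6⟩
        have hφt : Tendsto φ (𝓝 0) (𝓝 0) := by simpa [h0] using h1.continuousAt.tendsto
        refine ⟨fun k => ?_, h2⟩
        have hu : MZ (fun v => h k (φ v) + ∑ i ∈ Finset.range (d k), t v ^ (d k - i) * z k i (φ v).1) := by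
          refine MZ.unit (AnalyticAt.add ?_ (Finset.analyticAt_fun_sum _ fun i _ => (h4.fun_pow _).mul ?_)) ?_
          · exact AnalyticAt.fun_comp (g := h k) (by rw [h0]; exact hh k) h1
          · exact AnalyticAt.fun_comp (g := fun w : (Fin n → ℝ) × ℝ => z k i w.1)
              (by rw [h0]; exact analyticAt_comp_fst (hz k i)) h1
          · rw [Finset.sum_eq_zero]
            · rw [h0]; simpa using hh0 k
            · intro i hi
              have := Finset.mem_range.1 hi
              have : d k - i ≠ 0 := by omega
              simp [h5, this]
        refine MZ.congr ((h3.pow (d k)).mul hu) ?_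
        filter_upwards [h6, hφt.eventually (hF k)] with v a b
        rw [b, a, mul_add, Finset.mul_sum, add_comm]
        congr 1
        · ring
        · refine Finset.sum_congr rfl fun i hi => ?_
          have hi := Finset.mem_range.1 hi
          have : (φ v).2 ^ d k = (φ v).2 ^ (d k - i) * (φ v).2 ^ i := by
            rw [← pow_add]; congr 1; omega
          rw [this, mul_pow]; ring
    · refine prepA hIH hα hz hh hh0 hF hk0 hz0 hi1 hz1 hs c⁻¹ ?_ ?_
      · filter_upwards [hc.eventually_ne hc0] with ω h e
        simp [e] at h
      · simpa using hc.inv₀ hc0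
  · exact prepA hIH hα hz hh hh0 hF hk0 hz0 hi1 hz1 hs 0 h1 h2
end prep
end BL

namespace BL

section coef
variable {Ω : Type} {l : Ultrafilter Ω} {n : ℕ}

/-- The uniformization statement in dimension `n`. -/
def UProp (l : Ultrafilter Ω) (n : ℕ) : Prop :=
  ∀ (κ : Type) [Finite κ] (G : κ → (Fin n → ℝ) → ℝ), (∀ j, AnalyticAt ℝ (G j) 0) →
  ∀ (x : Ω → Fin n → ℝ), Tendsto x l (𝓝 0) → Res l n x (fun φ => ∀ j, MZ (fun v => G j (φ v)))

/-- power substitution with signs -/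
def sub (M : ℕ) (ε : Fin n → ℝ) (s : Fin n → ℝ) : Fin n → ℝ := fun j => ε j * s j ^ M

lemma sub_analytic (M : ℕ) (ε x : Fin n → ℝ) : AnalyticAt ℝ (sub M ε) x :=
  AnalyticAt.pi fun j => analyticAt_const.mul ((analyticAt_coord j x).fun_pow M)

lemma sub_at_zero {M : ℕ} (hM : M ≠ 0) (ε : Fin n → ℝ) : sub M ε 0 = 0 := by
  ext j; simp [sub, hM]

lemma mono_sub (M : ℕ) (ε s : Fin n → ℝ) (γ : Fin n → ℕ) :
    mono γ (sub M ε s) = mono γ ε * mono (M • γ) s := by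
  rw [mono_smul]
  simp [mono, sub, mul_pow, Finset.prod_mul_distrib, ← Finset.prod_pow, ← pow_mul, mul_comm]

lemma mono_ne {γ : Fin n → ℕ} {ε : Fin n → ℝ} (h : ∀ j, ε j ≠ 0) : mono γ ε ≠ 0 :=
  Finset.prod_ne_zero_iff.2 fun j _ => pow_ne_zero _ (h j)

lemma MZ.sub {F : (Fin n → ℝ) → ℝ} (hF : MZ F) {M : ℕ} (hM : M ≠ 0) {ε : Fin n → ℝ} (hε : ∀ j, ε j ≠ 0) :
    MZ (fun v => F (sub M ε v)) := by
  refine hF.comp (sub_analytic M ε 0) (sub_at_zero hM ε) fun j => ?_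
  exact (MZ.unit analyticAt_const (hε j)).mul ((MZ.coord j).pow M)

lemma exists_root {w : Ω → Fin n → ℝ} (hw : Tendsto w l (𝓝 0)) {M : ℕ} (hM : M ≠ 0) :
    ∃ (ε : Fin n → ℝ) (s : Ω → Fin n → ℝ), (∀ j, ε j ≠ 0) ∧ Tendsto s l (𝓝 0) ∧ ∀ᶠ ω in l, w ω = sub M ε (s ω) := by
  have h1 : ∀ j, ∃ ε : ℝ, ε ≠ 0 ∧ ∀ᶠ ω in l, w ω j = ε * |w ω j| := by
    intro j
    rcases l.em (fun ω => 0 ≤ w ω j) with h | h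
    · exact ⟨1, one_ne_zero, by filter_upwards [h] with ω h; rw [abs_of_nonneg h]; ring⟩
    · exact ⟨-1, by norm_num, by filter_upwards [h] with ω h; rw [abs_of_neg (not_le.1 h)]; ring⟩
  choose ε hε h2 using h1
  refine ⟨ε, fun ω j => |w ω j| ^ ((M:ℝ)⁻¹), hε, ?_, ?_⟩
  · rw [tendsto_pi_nhds] at hw ⊢
    intro j
    have := (hw j).abs.rpow_const (p := (M:ℝ)⁻¹) (Or.inr (by positivity))
    simpa [hM] using this
  · filter_upwards [eventually_all.2 h2] with ω h
    ext j
    rw [sub, Real.rpow_inv_natCast_pow (abs_nonneg _) hM]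
    exact h j

lemma exists_min {I : Type} [Finite I] (C : I → (Fin n → ℝ) → ℝ) (e : I → ℕ)
    (h1 : ∀ q, MZ (C q)) (h2 : ∀ q r, MZ (fun v => C q v ^ e q - C r v ^ e r)) :
    (∀ q, ∀ᶠ v in 𝓝 0, C q v = 0) ∨ ∃ q0 γ0, MU γ0 (C q0) ∧ (¬ ∀ᶠ v in 𝓝 0, C q0 v = 0) ∧
      ∀ q, (∀ᶠ v in 𝓝 0, C q v = 0) ∨ ∃ γ, MU γ (C q) ∧ (q = q0 → γ = γ0) ∧ e q0 • γ0 ≤ e q • γ := by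
  classical
  cases nonempty_fintype I
  by_cases hall : ∀ q, ∀ᶠ v in 𝓝 0, C q v = 0
  · exact Or.inl hall
  right
  have h3 : ∀ q, ∃ γ, (∀ᶠ v in 𝓝 0, C q v = 0) ∨ MU γ (C q) := by
    intro q
    rcases h1 q with h | ⟨γ, h⟩
    · exact ⟨0, Or.inl h⟩
    · exact ⟨γ, Or.inr h⟩
  choose γ hγ using h3
  push Not at hall
  obtain ⟨q1, hq1⟩ := hall
  obtain ⟨q0, hq0, hmin⟩ := Finset.exists_min_image (Finset.univ.filter fun q => ¬ ∀ᶠ v in 𝓝 0, C q v = 0)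
    (fun q => ∑ j, (e q • γ q) j) ⟨q1, by simpa using hq1⟩
  simp only [Finset.mem_filter, Finset.mem_univ, true_and] at hq0 hmin
  have hm0 := (hγ q0).resolve_left hq0
  refine ⟨q0, γ q0, hm0, hq0, fun q => ?_⟩
  by_cases hq : ∀ᶠ v in 𝓝 0, C q v = 0
  · exact Or.inl hq
  right
  have hm := (hγ q).resolve_left hq
  refine ⟨γ q, hm, fun h => by rw [h], ?_⟩
  rcases comparable (hm0.pow (e q0)) (hm.pow (e q)) (h2 q0 q) with h | h
  · exact h
  · have h4 := hmin q hq
    have h5 : ∀ j ∈ Finset.univ, (e q • γ q) j = (e q0 • γ q0) j :=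
      (Finset.sum_eq_sum_iff_of_le fun j _ => h j).1 (le_antisymm (Finset.sum_le_sum fun j _ => h j) h4)
    intro j
    exact (h5 j (Finset.mem_univ j)).ge

lemma coefPrep (hU : UProp l n) {I κ : Type} [Finite I] [Finite κ] {c : I → (Fin n → ℝ) → ℝ}
    (hc : ∀ q, AnalyticAt ℝ (c q) 0) (hc0 : ∀ q, c q 0 = 0) {m : I → ℕ} (hm : ∀ q, m q ≠ 0)
    {G : κ → (Fin n → ℝ) → ℝ} (hG : ∀ j, AnalyticAt ℝ (G j) 0) {x : Ω → Fin n → ℝ} (hx : Tendsto x l (𝓝 0)) :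
    Res l n x (fun φ => (∀ j, MZ (fun v => G j (φ v))) ∧
      ((∀ q, ∀ᶠ v in 𝓝 0, c q (φ v) = 0) ∨
        ∃ α : Fin n → ℕ, α ≠ 0 ∧ ∃ z : I → (Fin n → ℝ) → ℝ, (∀ q, AnalyticAt ℝ (z q) 0) ∧
          (∀ q, ∀ᶠ v in 𝓝 0, c q (φ v) = mono α v ^ m q * z q v) ∧ (∃ q, z q 0 ≠ 0) ∧
          ∀ q, (∀ᶠ x in 𝓝 0, c q x = 0) → z q 0 = 0)) := by
  classical
  cases nonempty_fintype I
  set M := ∏ q, m q with hMdef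
  have hM : M ≠ 0 := Finset.prod_ne_zero_iff.2 fun q _ => hm q
  have hdvd : ∀ q, ∃ e, M = m q * e := fun q => Finset.dvd_prod_of_mem m (Finset.mem_univ q)
  choose e he using hdvd
  have he0 : ∀ q, e q ≠ 0 := by
    intro q h
    apply hM; rw [he q, h, mul_zero]
  have hres := hU (κ ⊕ (I ⊕ I × I)) (Sum.elim G (Sum.elim c (fun q v => c q.1 v ^ e q.1 - c q.2 v ^ e q.2))) (by
    rintro (j | q | q)
    · exact hG j
    · exact hc q
    · exact ((hc q.1).fun_pow _).sub ((hc q.2).fun_pow _)) x hx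
  obtain ⟨w, ψ, hw, hψ, hψ0, hxψ, hMZ⟩ := hres
  have hψt : Tendsto ψ (𝓝 0) (𝓝 0) := by simpa [hψ0] using hψ.continuousAt.tendsto
  obtain ⟨ε, s, hε, hs, hws⟩ := exists_root hw hM
  have hσ := sub_analytic M ε 0
  have hσ0 : sub M ε 0 = 0 := sub_at_zero hM ε
  have hσt : Tendsto (sub M ε) (𝓝 0) (𝓝 0) := by simpa [hσ0] using hσ.continuousAt.tendsto
  refine ⟨s, fun v => ψ (sub M ε v), hs, ?_, by simp [hσ0, hψ0], ?_, ?_, ?_⟩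
  · exact AnalyticAt.fun_comp (g := ψ) (by rwa [hσ0]) hσ
  · filter_upwards [hxψ, hws] with ω a b
    rw [a, b]
  · intro j
    exact MZ.sub (hMZ (Sum.inl j)) hM hε
  · rcases exists_min (fun q v => c q (ψ v)) e (fun q => hMZ (Sum.inr (Sum.inl q)))
      (fun q r => hMZ (Sum.inr (Sum.inr (q, r)))) with h | ⟨q0, γ0, h1, h2, h3⟩
    · exact Or.inl fun q => hσt.eventually (h q)
    right
    have hγ0 : γ0 ≠ 0 := by
      rintro rfl
      obtain ⟨U, hU1, hU2, hU3⟩ := h1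
      have := hU3.self_of_nhds
      simp [hψ0, hc0, mono_zero] at this
      exact hU2 this.symm
    refine ⟨e q0 • γ0, ?_, ?_⟩
    · intro h
      apply hγ0
      funext j
      have := congrFun h j
      simpa [he0 q0] using this
    have hz : ∀ q, ∃ z : (Fin n → ℝ) → ℝ, AnalyticAt ℝ z 0 ∧
        (∀ᶠ v in 𝓝 0, c q (ψ (sub M ε v)) = mono (e q0 • γ0) v ^ m q * z v) ∧ (q = q0 → z 0 ≠ 0) ∧
        ((∀ᶠ v in 𝓝 0, c q (ψ v) = 0) → z 0 = 0) := by
      intro q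
      by_cases hq : ∀ᶠ v in 𝓝 0, c q (ψ v) = 0
      · refine ⟨fun _ => 0, analyticAt_const, ?_, ?_, fun _ => rfl⟩
        · filter_upwards [hσt.eventually hq] with v h
          simp [h]
        · rintro rfl; exact absurd hq h2
      obtain ⟨γ, ⟨U, hU1, hU2, hU3⟩, hγq, hle⟩ := (h3 q).resolve_left hq
      obtain ⟨δ, hδ⟩ : ∃ δ, M • γ = m q • (e q0 • γ0) + δ := by
        refine ⟨M • γ - m q • (e q0 • γ0), ?_⟩
        rw [add_tsub_cancel_of_le]
        rw [he q, mul_smul]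
        intro j
        exact Nat.mul_le_mul_left _ (hle j)
      refine ⟨fun v => mono δ v * (mono γ ε * U (sub M ε v)), ?_, ?_, ?_, fun h => absurd h hq⟩
      · refine (mono_analytic δ 0).mul (analyticAt_const.mul ?_)
        exact AnalyticAt.fun_comp (g := U) (by rwa [hσ0]) hσ
      · filter_upwards [hσt.eventually hU3] with v h
        rw [h, mono_sub, hδ, mono_add, mono_smul (m q)]
        ring
      · rintro rfl
        have hγ := hγq rfl
        subst hγ
        have hδ0 : δ = 0 := by
          rw [← mul_smul, ← he] at hδ
          simpa using hδ
        simp only [hδ0, mono_zero, hσ0]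
        exact mul_ne_zero one_ne_zero (mul_ne_zero (mono_ne hε) hU2)
    choose z hz1 hz2 hz3 hz4 using hz
    exact ⟨z, hz1, hz2, ⟨q0, hz3 q0 rfl⟩, fun q hq => hz4 q (hψt.eventually hq)⟩
end coef
end BL

namespace BL

section step
variable {Ω : Type} {l : Ultrafilter Ω} {n : ℕ}

lemma tendsto_of_analytic {E F : Type*} [NormedAddCommGroup E] [NormedSpace ℝ E] [NormedAddCommGroup F] [NormedSpace ℝ F]
    {f : E → F} (h : AnalyticAt ℝ f 0) (h0 : f 0 = 0) : Tendsto f (𝓝 0) (𝓝 0) := by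
  simpa [h0] using h.continuousAt.tendsto

lemma MZ.tail {F : (Fin n → ℝ) → ℝ} (h : MZ F) : MZ (fun v : Fin (n+1) → ℝ => F (Fin.tail v)) :=
  h.comp (analyticAt_tail 0) (by ext j; simp [Fin.tail]) fun j => MZ.coord j.succ

lemma Res.cons {x : Ω → Fin n → ℝ} {Q : ((Fin n → ℝ) → Fin n → ℝ) → Prop} (h : Res l n x Q)
    {y : Ω → ℝ} (hy : Tendsto y l (𝓝 0)) :
    Res l (n+1) (fun ω => (x ω, y ω)) (fun φ => ∃ ψ, AnalyticAt ℝ ψ 0 ∧ ψ 0 = 0 ∧ Q ψ ∧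
      φ = fun v => (ψ (Fin.tail v), v 0)) := by
  obtain ⟨w, ψ, h1, h2, h3, h4, h5⟩ := h
  have ht : Fin.tail (0 : Fin (n+1) → ℝ) = 0 := by ext j; simp [Fin.tail]
  refine ⟨fun ω => Fin.cons (y ω) (w ω), _, tendsto_cons hy h1, ?_, ?_, ?_, ψ, h2, h3, h5, rfl⟩
  · refine AnalyticAt.prod ?_ (analyticAt_coord 0 0)
    exact AnalyticAt.fun_comp (g := ψ) (by rwa [ht]) (analyticAt_tail 0)
  · simp [ht, h3]
  · filter_upwards [h4] with ω h
    simp [h]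

variable {ι : Type} [Fintype ι]

lemma reg_zero_ne {F : (Fin n → ℝ) × ℝ → ℝ} (h : Reg F 0) : F 0 ≠ 0 := by
  obtain ⟨U, h1, h2, h3⟩ := h
  have := h3.self_of_nhds
  rw [show (0 : (Fin n → ℝ) × ℝ) = (0, 0) from rfl, this]
  simpa using h2

lemma stepW (hU : UProp l n) (d : ι → ℕ) (hIH : ∀ d' : ι → ℕ, ∑ k, d' k < ∑ k, d k → WProp l n d') :
    WProp l n d := by
  intro F hF hreg κ _ G hG x y hx hy
  by_cases hd : ∀ k, d k = 0
  · refine ((hU κ G hG x hx).cons hy).imp ?_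
    rintro φ h1 h0 ⟨ψ, h2, h3, h4, hφ⟩
    refine ⟨fun k => MZ.unit ?_ ?_, fun j => by rw [hφ]; exact (h4 j).tail⟩
    · exact AnalyticAt.fun_comp (g := F k) (by rw [h0]; exact hF k) h1
    · rw [h0]
      exact reg_zero_ne (by simpa [hd k] using hreg k)
  push Not at hd
  obtain ⟨k0, hk0⟩ := hd
  obtain ⟨e, he⟩ := Nat.exists_eq_succ_of_ne_zero hk0
  have hregk0 := hreg k0
  rw [he] at hregk0
  obtain ⟨a, ha, ha0, hts⟩ := tsch (hF k0) hregk0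
  set χ : (Fin n → ℝ) × ℝ → (Fin n → ℝ) × ℝ := fun z => (z.1, a z.1 + z.2) with hχ
  have hχa : AnalyticAt ℝ χ 0 := analyticAt_fst.prod ((analyticAt_comp_fst ha).add analyticAt_snd)
  have hχ0 : χ 0 = 0 := by simp [hχ, ha0]
  set F1 : ι → (Fin n → ℝ) × ℝ → ℝ := fun k z => F k (χ z) with hF1
  have hF1a : ∀ k, AnalyticAt ℝ (F1 k) 0 := fun k => AnalyticAt.fun_comp (g := F k) (by rw [hχ0]; exact hF k) hχa
  have hF1r : ∀ k, Reg (F1 k) (d k) := by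
    intro k
    obtain ⟨V, h1, h2, h3⟩ := hreg k
    exact ⟨V, h1, h2, by filter_upwards [h3] with y h; simpa [hF1, hχ, ha0] using h⟩
  set y1 : Ω → ℝ := fun ω => y ω - a (x ω) with hy1
  have hat : Tendsto a (𝓝 0) (𝓝 0) := tendsto_of_analytic ha ha0
  have hy1t : Tendsto y1 l (𝓝 0) := by simpa using hy.sub (hat.comp hx)
  suffices hsuff : Res l (n+1) (fun ω => (x ω, y1 ω)) (fun φ => (∀ k, MZ (fun v => F1 k (φ v))) ∧
      ∀ j, MZ (fun v => G j (φ v).1)) by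
    refine hsuff.trans χ hχa hχ0 ?_ ?_
    · exact Eventually.of_forall fun ω => by simp [hχ, hy1]
    · rintro φ - - ⟨h1, h2⟩
      exact ⟨h1, h2⟩
  choose c h hc hc0 hh hh0 hexp using fun k => expand (d k) (hF1a k) (hF1r k)
  have hce : ∀ᶠ x in 𝓝 0, c k0 e x = 0 := by
    refine hts (c k0) (h k0) (hh k0) ?_
    have := hexp k0
    rw [he] at this
    exact this
  rcases l.em (fun ω => y1 ω = 0) with hz | hz
  · have hres := hU (ι ⊕ κ) (Sum.elim (fun k x => F1 k (x, 0)) G) (by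
      rintro (k | j)
      · exact analyticAt_inl0 (hF1a k)
      · exact hG j) x hx
    refine (hres.cons (y := fun _ => 0) tendsto_const_nhds).trans (fun z => (z.1, 0))
      (analyticAt_fst.prod analyticAt_const) rfl ?_ ?_
    · filter_upwards [hz] with ω h
      rw [h]
    · rintro φ - - ⟨ψ, -, -, h4, rfl⟩
      exact ⟨fun k => (h4 (Sum.inl k)).tail, fun j => (h4 (Sum.inr j)).tail⟩
  · have hres := coefPrep hU (I := Σ k, Fin (d k)) (κ := κ) (c := fun q => c q.1 q.2) (fun q => hc _ _)
      (fun q => hc0 _ _) (m := fun q => d q.1 - q.2) (fun q => by have := q.2.2; omega) hG hx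
    obtain ⟨w, ψ, hw, hψ, hψ0, hxψ, hGψ, hcase⟩ := hres
    set η : (Fin n → ℝ) × ℝ → (Fin n → ℝ) × ℝ := fun z => (ψ z.1, z.2) with hη
    have hηa : AnalyticAt ℝ η 0 := by
      refine AnalyticAt.prod ?_ analyticAt_snd
      exact AnalyticAt.fun_comp (g := ψ) hψ analyticAt_fst
    have hη0 : η 0 = 0 := by simp [hη, hψ0]
    have hηt := tendsto_of_analytic hηa hη0
    have hfstt : Tendsto (fun z : (Fin n → ℝ) × ℝ => z.1) (𝓝 0) (𝓝 0) := tendsto_of_analytic analyticAt_fst rfl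
    have hh2 : ∀ k, AnalyticAt ℝ (fun z => h k (η z)) 0 := fun k =>
      AnalyticAt.fun_comp (g := h k) (by rw [hη0]; exact hh k) hηa
    suffices hsuff : Res l (n+1) (fun ω => (w ω, y1 ω)) (fun φ => (∀ k, MZ (fun v => F1 k (η (φ v)))) ∧
        ∀ j, MZ (fun v => (φ v).1 j)) by
      refine hsuff.trans η hηa hη0 ?_ ?_
      · filter_upwards [hxψ] with ω h
        simp [hη, h]
      · rintro φ h1 h0 ⟨h2, h3⟩
        refine ⟨h2, fun j => ?_⟩
        exact (hGψ j).comp (AnalyticAt.fun_comp analyticAt_fst h1) (by simp [h0]) h3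
    rcases hcase with hcase | ⟨α, hα, z, hz1, hz2, ⟨q1, hq1⟩, hz4⟩
    · have hs0 : spl (0 : Fin (n+1) → ℝ) = 0 := by
        ext j <;> simp [spl, Fin.tail]
      have hst := tendsto_of_analytic (analyticAt_spl (0 : Fin (n+1) → ℝ)) hs0
      refine ⟨fun ω => Fin.cons (y1 ω) (w ω), spl, tendsto_cons hy1t hw, analyticAt_spl 0, hs0, by simp [spl], ?_,
        fun j => MZ.coord j.succ⟩
      intro k
      refine MZ.congr (F := fun v => h k (η (spl v)) * v 0 ^ d k) ?_ ?_
      · refine MZ.mul (MZ.unit ?_ ?_) ((MZ.coord 0).pow _)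
        · exact AnalyticAt.fun_comp (g := fun z => h k (η z)) (by rw [hs0]; exact hh2 k) (analyticAt_spl 0)
        · rw [hs0, hη0]; exact hh0 k
      · have hall : ∀ᶠ v in 𝓝 0, ∀ q : Fin (d k), c k q (ψ v) = 0 :=
          eventually_all.2 fun q => hcase ⟨k, q⟩
        filter_upwards [hst.eventually (hηt.eventually (hexp k)), hst.eventually (hfstt.eventually hall)] with v e1 e2
        rw [e1, Finset.sum_eq_zero, zero_add]
        · rfl
        · intro i hi
          have := e2 ⟨i, Finset.mem_range.1 hi⟩
          simp only [hη]
          simp only at this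
          rw [this, zero_mul]
    · refine prep (F := fun k z => F1 k (η z)) (h := fun k z => h k (η z)) (d := d) hIH hα
        (z := fun k i => if hi : i < d k then z ⟨k, ⟨i, hi⟩⟩ else fun _ => 0) ?_ hh2 ?_ ?_ he ?_
        (k1 := q1.1) (i1 := q1.2) q1.2.2 ?_ hw hy1t hz
      · intro k i
        split_ifs
        · exact hz1 _
        · exact analyticAt_const
      · intro k
        simp only [hη0]
        exact hh0 k
      · intro k
        have hall : ∀ᶠ v in 𝓝 0, ∀ q : Fin (d k), c k q (ψ v) = mono α v ^ (d k - q) * z ⟨k, q⟩ v :=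
          eventually_all.2 fun q => hz2 ⟨k, q⟩
        filter_upwards [hηt.eventually (hexp k), hfstt.eventually hall] with v e1 e2
        rw [e1]
        congr 1
        refine Finset.sum_congr rfl fun i hi => ?_
        have hi := Finset.mem_range.1 hi
        have := e2 ⟨i, hi⟩
        simp only [dif_pos hi]
        simp only [hη]
        simp only at this
        rw [this]
      · have hlt : e < d k0 := by omega
        rw [dif_pos hlt]
        exact hz4 ⟨k0, ⟨e, hlt⟩⟩ hce
      · simpa using hq1

lemma allW (hU : UProp l n) (d : ι → ℕ) : WProp l n d := by
  have : ∀ D, ∀ d : ι → ℕ, ∑ k, d k = D → WProp l n d := by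
    intro D
    induction D using Nat.strong_induction_on with
    | _ D ih =>
      intro d hd
      exact stepW hU d fun d' hd' => ih _ (hd ▸ hd') d' rfl
  exact this _ d rfl
end step
end BL

namespace BL

section ustep

lemma exists_dir {E : Type} [NormedAddCommGroup E] [NormedSpace ℝ E] {κ : Type} [Finite κ] {G : κ → E → ℝ}
    (hG : ∀ k, AnalyticAt ℝ (G k) 0) (h0 : ∀ k, ¬ ∀ᶠ v in 𝓝 0, G k v = 0) :
    ∃ e : E, ∀ k, ¬ ∀ᶠ t in 𝓝 (0:ℝ), G k (t • e) = 0 := by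
  classical
  cases nonempty_fintype κ
  have h1 : ∀ᶠ v in 𝓝 (0:E), ∀ k, AnalyticAt ℝ (G k) v := eventually_all.2 fun k => (hG k).eventually_analyticAt
  obtain ⟨r, hr, hB⟩ := Metric.eventually_nhds_iff_ball.1 h1
  have hBan : ∀ k, AnalyticOnNhd ℝ (G k) (Metric.ball 0 r) := fun k v hv => hB v hv k
  have hpre : IsPreconnected (Metric.ball (0:E) r) := (convex_ball 0 r).isPreconnected
  have h2 : ∀ s : Finset κ, ∃ v ∈ Metric.ball (0:E) r, ∀ k ∈ s, G k v ≠ 0 := by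
    intro s
    induction s using Finset.induction_on with
    | empty => exact ⟨0, by simpa using hr, by simp⟩
    | insert k s hk ih =>
      obtain ⟨v, hv, hs⟩ := ih
      have h3 : ¬ ∀ᶠ u in 𝓝 v, G k u = 0 := by
        intro h
        have := (hBan k).eqOn_zero_of_preconnected_of_eventuallyEq_zero hpre hv h
        apply h0 k
        filter_upwards [Metric.ball_mem_nhds (0:E) hr] with u hu
        exact this hu
      have h4 : ∀ᶠ u in 𝓝 v, u ∈ Metric.ball (0:E) r ∧ ∀ k ∈ s, G k u ≠ 0 := by
        refine Filter.Eventually.and (Metric.isOpen_ball.mem_nhds hv) ?_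
        rw [eventually_all_finset]
        intro k hk
        exact (hBan k v hv).continuousAt.eventually_ne (hs k hk)
      obtain ⟨u, hu1, hu2, hu3⟩ := ((not_eventually.1 h3).and_eventually h4).exists
      refine ⟨u, hu2, ?_⟩
      intro j hj
      rcases Finset.mem_insert.1 hj with rfl | hj
      · exact hu1
      · exact hu3 j hj
  obtain ⟨e, he, hk⟩ := h2 Finset.univ
  refine ⟨e, fun k h => hk k (Finset.mem_univ k) ?_⟩
  have han : AnalyticOnNhd ℝ (fun t : ℝ => G k (t • e)) (Set.Icc 0 1) := by
    intro t ht
    refine AnalyticAt.fun_comp (g := G k) (hBan k _ ?_) (analyticAt_id.smul analyticAt_const)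
    simp only [Metric.mem_ball, dist_zero_right, norm_smul, Real.norm_eq_abs, abs_of_nonneg ht.1] at he ⊢
    nlinarith [ht.2, norm_nonneg e]
  have := han.eqOn_zero_of_preconnected_of_eventuallyEq_zero isPreconnected_Icc (Set.left_mem_Icc.2 zero_le_one) h
    (Set.right_mem_Icc.2 zero_le_one)
  simpa using this

variable {Ω : Type} {l : Ultrafilter Ω} {n : ℕ}

lemma U0 : UProp l 0 := by
  intro κ _ G hG x hx
  refine ⟨x, id, hx, analyticAt_id, rfl, by simp, fun j => ?_⟩
  by_cases h : G j 0 = 0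
  · left
    exact Eventually.of_forall fun v => by rw [← h]; congr 1; exact Subsingleton.elim _ _
  · exact MZ.unit (hG j) h

lemma stepU (hU : UProp l n) : UProp l (n+1) := by
  classical
  intro κ _ G hG x hx
  set ι := {k : κ // ¬ ∀ᶠ v in 𝓝 0, G k v = 0} with hι
  cases nonempty_fintype ι
  obtain ⟨e, he⟩ := exists_dir (κ := Option ι) (G := fun o => o.elim (fun v : Fin (n+1) → ℝ => v 0) (fun k => G k.1)) (by
    rintro (_ | k)
    · exact analyticAt_coord 0 0
    · exact hG k.1) (by
    rintro (_ | k)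
    · intro h
      have h1 : Tendsto (fun t : ℝ => (fun _ => t : Fin (n+1) → ℝ)) (𝓝 0) (𝓝 0) := by
        have : Continuous (fun t : ℝ => (fun _ => t : Fin (n+1) → ℝ)) := by fun_prop
        exact this.tendsto 0
      have h2 : ∀ᶠ t in 𝓝 (0:ℝ), t = 0 := h1.eventually h
      have h3 : ∀ᶠ t in 𝓝[≠] (0:ℝ), False := by
        filter_upwards [h2.filter_mono nhdsWithin_le_nhds, self_mem_nhdsWithin] with t a b using b a
      exact h3.exists.elim fun _ h => h
    · exact k.2)
  have he0 : e 0 ≠ 0 := by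
    intro h
    apply he none
    simp [h]
  have hek : ∀ k : ι, ¬ ∀ᶠ t in 𝓝 (0:ℝ), G k.1 (t • e) = 0 := fun k => he (some k)
  set L : (Fin n → ℝ) × ℝ → (Fin (n+1) → ℝ) := fun z => z.2 • e + Fin.cons 0 z.1 with hL
  have hLa : AnalyticAt ℝ L 0 := by
    refine AnalyticAt.add (analyticAt_snd.smul analyticAt_const) ?_
    refine AnalyticAt.pi fun j => ?_
    refine Fin.cases ?_ (fun j => ?_) j
    · simpa using analyticAt_const
    · simp only [Fin.cons_succ]
      exact AnalyticAt.fun_comp (analyticAt_coord j _) analyticAt_fst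
  have hL0 : L 0 = 0 := by
    ext j
    refine Fin.cases ?_ (fun j => ?_) j <;> simp [hL]
  have hord : ∀ k : ι, ∃ d, Reg (fun z => G k.1 (L z)) d := by
    intro k
    have h1 : AnalyticAt ℝ (fun t : ℝ => G k.1 (t • e)) 0 := by
      refine AnalyticAt.fun_comp (g := G k.1) ?_ (analyticAt_id.smul analyticAt_const)
      simpa using hG k.1
    obtain ⟨d, g, hg, hg0, hev⟩ := h1.exists_eventuallyEq_pow_smul_nonzero_iff.2 (hek k)
    refine ⟨d, g, hg, hg0, ?_⟩
    filter_upwards [hev] with t ht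
    have h2 : L (0, t) = t • e := by
      ext j
      refine Fin.cases ?_ (fun j => ?_) j <;> simp [hL]
    rw [h2, ht]
    simp
  choose d hd using hord
  have hxj := tendsto_pi_nhds.1 hx
  have hyt : Tendsto (fun ω => x ω 0 / e 0) l (𝓝 0) := by simpa using (hxj 0).div_const (e 0)
  have hst : Tendsto (fun ω => (Fin.tail (x ω - (x ω 0 / e 0) • e) : Fin n → ℝ)) l (𝓝 0) := by
    rw [tendsto_pi_nhds]
    intro j
    simpa [Fin.tail] using (hxj j.succ).sub (hyt.mul_const (e j.succ))
  have key := allW hU d (fun k z => G k.1 (L z))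
    (fun k => AnalyticAt.fun_comp (g := G k.1) (by rw [hL0]; exact hG k.1) hLa) hd Empty (fun j => j.elim) (fun j => j.elim)
    _ _ hst hyt
  refine key.trans L hLa hL0 ?_ ?_
  · refine Eventually.of_forall fun ω => ?_
    ext j
    refine Fin.cases ?_ (fun j => ?_) j
    · simp [hL]; field_simp
    · simp [hL, Fin.tail]
  · rintro φ h1 h0 ⟨h2, -⟩ k
    by_cases hk : ∀ᶠ v in 𝓝 0, G k v = 0
    · left
      exact ((tendsto_of_analytic hLa hL0).comp (tendsto_of_analytic h1 h0)).eventually hk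
    · exact h2 ⟨k, hk⟩

theorem allU (l : Ultrafilter Ω) : ∀ n, UProp l n
  | 0 => U0
  | n + 1 => stepU (allU l n)

end ustep
end BL

namespace BL
section final
variable {n : ℕ}

/-- The Riesz isomorphism as a real linear map. -/
noncomputable def riesz (n : ℕ) : StrongDual ℝ (EuclideanSpace ℝ (Fin n)) →L[ℝ] EuclideanSpace ℝ (Fin n) where
  toFun := fun a => (InnerProductSpace.toDual ℝ (EuclideanSpace ℝ (Fin n))).symm a
  map_add' := fun a b => map_add _ a b
  map_smul' := fun c a => by simp
  cont := (InnerProductSpace.toDual ℝ (EuclideanSpace ℝ (Fin n))).symm.continuous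

lemma grad_analytic {f : EuclideanSpace ℝ (Fin n) → ℝ} {x} (hf : AnalyticAt ℝ f x) : AnalyticAt ℝ (gradient f) x := by
  have h1 := (riesz n).analyticAt (fderiv ℝ f x)
  exact h1.comp hf.fderiv

lemma grad_inner {f : EuclideanSpace ℝ (Fin n) → ℝ} {x} (hf : AnalyticAt ℝ f x) (a b : EuclideanSpace ℝ (Fin n)) :
    ⟪fderiv ℝ (gradient f) x a, b⟫ = fderiv ℝ (fderiv ℝ f) x a b := by
  have hd : DifferentiableAt ℝ (fderiv ℝ f) x := hf.fderiv.differentiableAt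
  have h1 : HasFDerivAt (gradient f)
      ((riesz n).comp (fderiv ℝ (fderiv ℝ f) x)) x :=
    (riesz n).hasFDerivAt.comp x hd.hasFDerivAt
  rw [h1.fderiv]
  exact InnerProductSpace.toDual_symm_apply

lemma grad_symm {f : EuclideanSpace ℝ (Fin n) → ℝ} {x} (hf : AnalyticAt ℝ f x) (a b : EuclideanSpace ℝ (Fin n)) :
    ⟪fderiv ℝ (gradient f) x a, b⟫ = ⟪fderiv ℝ (gradient f) x b, a⟫ := by
  rw [grad_inner hf, grad_inner hf]
  have : IsSymmSndFDerivAt ℝ f x := hf.contDiffAt.isSymmSndFDerivAt (n := 2) (by simp)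
  exact this a b

lemma grad_sq {f : EuclideanSpace ℝ (Fin n) → ℝ} {x} (hf : AnalyticAt ℝ f x) (b : EuclideanSpace ℝ (Fin n)) :
    fderiv ℝ (fun x => ‖gradient f x‖ ^ 2) x b = 2 * ⟪fderiv ℝ (gradient f) x (gradient f x), b⟫ := by
  have h := (grad_analytic hf).differentiableAt.hasFDerivAt.norm_sq
  rw [h.fderiv, grad_symm hf, real_inner_comm]
  simp

lemma sq_analytic {f : EuclideanSpace ℝ (Fin n) → ℝ} {x} (hf : AnalyticAt ℝ f x) :
    AnalyticAt ℝ (fun x => ‖gradient f x‖ ^ 2) x := by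
  have h := grad_analytic hf
  have h2 : AnalyticAt ℝ (fun x => ∑ j, (gradient f x) j ^ 2) x := by
    refine Finset.analyticAt_fun_sum _ fun j _ => AnalyticAt.fun_pow ?_ 2
    exact AnalyticAt.fun_comp ((EuclideanSpace.proj (𝕜 := ℝ) j).analyticAt _) h
  refine h2.congr (Eventually.of_forall fun x => ?_)
  simp [EuclideanSpace.norm_sq_eq]

lemma seq_contra {f : EuclideanSpace ℝ (Fin n) → ℝ} (hf : AnalyticAt ℝ f 0) (hg : gradient f 0 = 0)
    (x : ℕ → EuclideanSpace ℝ (Fin n)) (hx : Tendsto x atTop (𝓝 0))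
    (hlt : ∀ k, ‖x k‖ * ‖fderiv ℝ (gradient f) (x k) (gradient f (x k))‖ < 1 / ((k:ℝ)+1) * ‖gradient f (x k)‖ ^ 2) :
    False := by
  set l : Ultrafilter ℕ := hyperfilter ℕ with hl
  have hlat : (l : Filter ℕ) ≤ atTop := by
    rw [hl, ← Nat.cofinite_eq_atTop]; exact hyperfilter_le_cofinite
  set T := EuclideanSpace.equiv (Fin n) ℝ with hT
  set g0 : EuclideanSpace ℝ (Fin n) → ℝ := fun x => ‖gradient f x‖ ^ 2 with hg0
  have hg0a : AnalyticAt ℝ g0 0 := sq_analytic hf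
  have hTs : AnalyticAt ℝ (fun u => T.symm u) (0 : Fin n → ℝ) := T.symm.toContinuousLinearMap.analyticAt 0
  have hxT : Tendsto (fun k => T (x k)) l (𝓝 0) := by
    have := (T.continuous.tendsto 0).comp (hx.mono_left hlat)
    rw [map_zero] at this
    exact this
  obtain ⟨w, φ, hw, hφ, hφ0, hxφ, hMZ⟩ := allU l n (Option (Fin n))
    (fun o => o.elim (fun u => g0 (T.symm u)) (fun j u => u j)) (by
      rintro (_ | j)
      · exact AnalyticAt.fun_comp (g := g0) (by simpa using hg0a) hTs
      · exact analyticAt_coord j 0) (fun k => T (x k)) hxT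
  have hne : ∀ k, 0 < g0 (x k) := by
    intro k
    have h1 := hlt k
    have h2 : 0 ≤ ‖x k‖ * ‖fderiv ℝ (gradient f) (x k) (gradient f (x k))‖ := by positivity
    have h3 := h2.trans_lt h1
    have : (0:ℝ) < 1 / ((k:ℝ)+1) := by positivity
    exact (pos_iff_pos_of_mul_pos h3).1 this
  obtain ⟨κ0, r, hκ0, hE0, hr⟩ := euler (hMZ none)
  simp only [Option.elim] at hE0 hr
  have hr0 : 0 < r := by
    rcases hr (by simp [hφ0, hg0, hg]) with h | h
    · exfalso
      obtain ⟨k, h1, h2⟩ := ((hw.eventually h).and hxφ).exists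
      rw [← h2] at h1
      have := hne k
      simp at h1
      linarith
    · exact h
  choose κ' r' hκ' hE' _ using fun j => euler (hMZ (some j))
  simp only [Option.elim] at hE'
  set B : ℝ := 1 + ∑ j, (|r' j| + 1) with hB
  have hB0 : 0 < B := by positivity
  have hBj : ∀ j, |r' j| < B := by
    intro j
    have := Finset.single_le_sum (f := fun j => |r' j| + 1) (fun i _ => by positivity) (Finset.mem_univ j)
    linarith
  have hev1 : ∀ᶠ k in l, ∀ j, |κ' j (w k)| < B :=
    eventually_all.2 fun j => ((hκ' j).abs.comp hw).eventually_lt_const (hBj j)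
  have hev2 : ∀ᶠ k in l, r / 2 < κ0 (w k) := (hκ0.comp hw).eventually_const_lt (by linarith)
  have hdφ : ∀ᶠ v in 𝓝 0, DifferentiableAt ℝ φ v := hφ.eventually_analyticAt.mono fun _ h => h.differentiableAt
  have hfx : ∀ᶠ k in l, AnalyticAt ℝ f (x k) := (hx.mono_left hlat).eventually hf.eventually_analyticAt
  have hsm : ∀ᶠ k : ℕ in l, 1 / ((k:ℝ)+1) < r / (4 * B) :=
    hlat ((tendsto_one_div_add_atTop_nhds_zero_nat (𝕜 := ℝ)).eventually_lt_const (by positivity))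
  obtain ⟨k, e1, e2, e3, e4, e5, e6, e7, e8⟩ := (hev1.and (hev2.and ((hw.eventually hdφ).and (hfx.and (hsm.and
    (hxφ.and ((hw.eventually hE0).and (hw.eventually (eventually_all.2 hE'))))))))).exists
  set ξ : Fin n → ℝ := fderiv ℝ φ (w k) (w k) with hξ
  have hξj : ∀ j, ξ j = κ' j (w k) * x k j := by
    intro j
    have h1 := e8 j
    have h2 : HasFDerivAt (fun v => φ v j) ((ContinuousLinearMap.proj (R := ℝ) j).comp (fderiv ℝ φ (w k))) (w k) :=
      hasFDerivAt_pi'.1 e3.hasFDerivAt j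
    rw [h2.fderiv, ← e6] at h1
    exact h1
  have hTξ : ‖T.symm ξ‖ ≤ B * ‖x k‖ := by
    rw [EuclideanSpace.norm_eq, EuclideanSpace.norm_eq, ← Real.sqrt_sq hB0.le, ← Real.sqrt_mul (sq_nonneg B)]
    refine Real.sqrt_le_sqrt ?_
    rw [Finset.mul_sum]
    refine Finset.sum_le_sum fun j _ => ?_
    rw [← mul_pow]
    refine pow_le_pow_left₀ (norm_nonneg _) ?_ 2
    show ‖ξ j‖ ≤ _
    rw [hξj j, norm_mul]
    exact mul_le_mul_of_nonneg_right (e1 j).le (norm_nonneg _)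
  have hchain : fderiv ℝ (fun v => g0 (T.symm (φ v))) (w k) (w k) = fderiv ℝ g0 (x k) (T.symm ξ) := by
    have h0 : T.symm (φ (w k)) = x k := by rw [← e6]; simp
    have h1 : HasFDerivAt (fun v => T.symm (φ v)) ((T.symm : (Fin n → ℝ) →L[ℝ] _).comp (fderiv ℝ φ (w k))) (w k) :=
      T.symm.hasFDerivAt.comp (w k) e3.hasFDerivAt
    have h2 : HasFDerivAt g0 (fderiv ℝ g0 (x k)) (T.symm (φ (w k))) := by
      rw [h0]; exact (sq_analytic e4).differentiableAt.hasFDerivAt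
    have h3 := h2.comp (w k) h1
    have h4 : fderiv ℝ (fun v => g0 (T.symm (φ v))) (w k) = _ := h3.fderiv
    rw [h4]
    rfl
  rw [hchain, ← e6, grad_sq e4] at e7
  simp only [ContinuousLinearEquiv.symm_apply_apply] at e7
  have h1 := real_inner_le_norm (fderiv ℝ (gradient f) (x k) (gradient f (x k))) (T.symm ξ)
  set A := ‖fderiv ℝ (gradient f) (x k) (gradient f (x k))‖ with hA
  have h2 : A * ‖T.symm ξ‖ ≤ A * (B * ‖x k‖) := mul_le_mul_of_nonneg_left hTξ (norm_nonneg _)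
  have h3 := hlt k
  have h4 := hne k
  have h5 : ‖x k‖ * A < r / (4 * B) * g0 (x k) := h3.trans (mul_lt_mul_of_pos_right e5 h4)
  have h6 : r / 2 * g0 (x k) < κ0 (w k) * g0 (x k) := mul_lt_mul_of_pos_right e2 h4
  have h7 : B * (‖x k‖ * A) < B * (r / (4 * B) * g0 (x k)) := mul_lt_mul_of_pos_left h5 hB0
  have h8 : B * (r / (4 * B) * g0 (x k)) = r / 4 * g0 (x k) := by field_simp
  nlinarith

end final
end BL

/-- Bochnak–Łojasiewicz inequality applied to `|∇f|`: near the origin,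
`|x|·|Hs(f)(x)·∇f(x)| ≥ C·|∇f(x)|²`. -/
theorem bochnak_lojasiewicz_for_norm_gradient
    {n : ℕ} (hn : 2 ≤ n)
    (U : Set (EuclideanSpace ℝ (Fin n))) (hUopen : IsOpen U)
    (hOU : (0 : EuclideanSpace ℝ (Fin n)) ∈ U)
    (f : EuclideanSpace ℝ (Fin n) → ℝ)
    (hfan : AnalyticOnNhd ℝ f U) (hf0 : f 0 = 0) (hgf0 : gradient f 0 = 0)
    :
    ∃ C : ℝ, 0 < C ∧ ∃ V : Set (EuclideanSpace ℝ (Fin n)),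
      IsOpen V ∧ V ⊆ U ∧ (0 : EuclideanSpace ℝ (Fin n)) ∈ V ∧
      ∀ x ∈ V, C * ‖gradient f x‖ ^ 2 ≤ ‖x‖ * ‖fderiv ℝ (gradient f) x (gradient f x)‖ := by
  by_contra hcon
  have h1 : ∀ k : ℕ, ∃ x, ‖x‖ < 1 / ((k:ℝ)+1) ∧
      ‖x‖ * ‖fderiv ℝ (gradient f) x (gradient f x)‖ < 1 / ((k:ℝ)+1) * ‖gradient f x‖ ^ 2 := by
    intro k
    by_contra! h
    apply hcon
    have hk : (0:ℝ) < 1 / ((k:ℝ)+1) := by positivity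
    refine ⟨1 / ((k:ℝ)+1), hk, U ∩ Metric.ball 0 (1 / ((k:ℝ)+1)), hUopen.inter Metric.isOpen_ball,
      Set.inter_subset_left, ⟨hOU, Metric.mem_ball_self hk⟩, ?_⟩
    rintro x ⟨_, hx⟩
    exact h x (by simpa using hx)
  choose x hx hlt using h1
  refine BL.seq_contra (hfan 0 hOU) hgf0 x ?_ hlt
  exact squeeze_zero_norm (fun k => (hx k).le) tendsto_one_div_add_atTop_nhds_zero_nat
end
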